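/- arXiv:1003.3597 — 11 statements merged into one kernel-verified Lean document; each statement's English description precedes it below -/
import Mathlib

section
/- Let c₁, c₂ be real numbers with |c₁| + |c₂| = 1 and c₁c₂ ≠ 0, and let (c_n)_{n≥1} be the 2-periodic sequence with c_n = c₁ for odd n and c_n = c₂ for even n. Then for every finitely supported sequence u : ℕ₊ → ℂ, the Jacobi quadratic form satisfies Q(u) = Σ_{n≥1} n|u_n|² + 2 Σ_{n≥1} c_n n Re(u_n · conj(u_{n+1})) ≥ min{|c₁|, |c₂|} · Σ_{n≥1} |u_n|². -/
/-!
Write `dₙ = |cₙ|`, so that `dₙ + dₙ₊₁ = 1` for all `n`. By the arithmetic-geometric mean inequality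
`2 cₙ n Re(uₙ conj uₙ₊₁) ≥ -dₙ n (|uₙ|² + |uₙ₊₁|²)`, so the coefficient of `|uₙ|²` in the resulting
lower bound for `Q(u)` is `n - dₙ n - dₙ₋₁ (n - 1) = dₙ₋₁ ≥ min |c₁| |c₂|` (with `d₀ = |c₂|`).
The reindexing `n + 1 ↦ n` is carried out as a telescoping sum: `jacobi_term_bound` bounds each term
of `Q(u)` below, with `gₙ = (1 - dₙ)(n - 1)|uₙ|² = dₙ₋₁ (n - 1)|uₙ|²`, by
`min |c₁| |c₂| |uₙ|² + gₙ - gₙ₊₁`; here `g₁ = 0`, and `gₙ = 0` beyond the support of `u`.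
-/

/-- If `m ≤ 1 - d`, the summand of `Q(u)` at index `k + 1` dominates `m |z|²` up to the telescoping difference
`(1 - d) k |z|² - d (k + 1) |w|²`, where `z`, `w` are consecutive values of `u` and `d = |c|`. -/
lemma jacobi_term_bound (c m : ℝ) (hm : m ≤ 1 - |c|) (k : ℕ) (z w : ℂ) :
    m * ‖z‖ ^ 2 + ((1 - |c|) * k * ‖z‖ ^ 2 - |c| * (k + 1) * ‖w‖ ^ 2) ≤
      ((k : ℝ) + 1) * ‖z‖ ^ 2 + 2 * (c * ((k : ℝ) + 1) * (z * (starRingEnd ℂ) w).re) := by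
  have h1 : |(z * (starRingEnd ℂ) w).re| ≤ ‖z‖ * ‖w‖ := by
    simpa using Complex.abs_re_le_norm (z * (starRingEnd ℂ) w)
  have h2 : -(|c| * (‖z‖ * ‖w‖)) ≤ c * (z * (starRingEnd ℂ) w).re := by
    have := neg_abs_le (c * (z * (starRingEnd ℂ) w).re)
    rw [abs_mul] at this
    nlinarith [mul_le_mul_of_nonneg_left h1 (abs_nonneg c)]
  have hk : (0 : ℝ) ≤ (k : ℝ) + 1 := by positivity
  have h3 := mul_le_mul_of_nonneg_left h2 hk
  have h4 : 0 ≤ ((k : ℝ) + 1) * |c| * (‖z‖ - ‖w‖) ^ 2 := by positivity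
  have h5 := mul_le_mul_of_nonneg_right hm (sq_nonneg ‖z‖)
  nlinarith

/-- If `|c₁| + |c₂| = 1` and `c₁c₂ ≠ 0`, then for every finitely
supported `u : ℕ+ → ℂ` the Jacobi quadratic form satisfies
`Q(u) = Σ n|uₙ|² + 2 Σ cₙ n Re(uₙ conj u_{n+1}) ≥ min{|c₁|,|c₂|} Σ |uₙ|²`. -/
theorem stmt_1 (c₁ c₂ : ℝ) (habs : |c₁| + |c₂| = 1) (hne : c₁ * c₂ ≠ 0)
    (c : ℕ+ → ℝ)
    (hodd : ∀ n : ℕ+, Odd (n : ℕ) → c n = c₁)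
    (heven : ∀ n : ℕ+, Even (n : ℕ) → c n = c₂)
    (u : ℕ+ → ℂ) (hu : Set.Finite (Function.support u)) :
    min |c₁| |c₂| * ∑' n : ℕ+, ‖u n‖ ^ 2 ≤
      (∑' n : ℕ+, ((n : ℕ) : ℝ) * ‖u n‖ ^ 2)
        + 2 * ∑' n : ℕ+, c n * ((n : ℕ) : ℝ) * (u n * (starRingEnd ℂ) (u (n + 1))).re := by
  obtain ⟨M, hM⟩ := hu.bddAbove
  have hu0 : ∀ n : ℕ+, M < n → u n = 0 := fun n hn => by
    by_contra h
    exact absurd (hM (Function.mem_support.mpr h)) (not_le.mpr hn)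
  have hu1 : ∀ k : ℕ, (M : ℕ) ≤ k → u k.succPNat = 0 := fun k hk =>
    hu0 _ (by rw [← PNat.coe_lt_coe, Nat.succPNat_coe]; omega)
  have hsum : ∀ f : ℕ+ → ℝ, (∀ n, u n = 0 → f n = 0) →
      ∑' n, f n = ∑ k ∈ Finset.range M, f k.succPNat := fun f hf => by
    rw [← Equiv.pnatEquivNat.symm.tsum_eq]
    refine tsum_eq_sum fun k hk => hf _ (hu1 k ?_)
    simpa using hk
  have hsucc : ∀ k : ℕ, k.succPNat + 1 = (k + 1).succPNat := fun k => rfl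
  have hd : ∀ n : ℕ+, min |c₁| |c₂| ≤ 1 - |c n| ∧ |c n| = 1 - |c (n + 1)| := fun n => by
    rcases Nat.even_or_odd (n : ℕ) with h | h
    · rw [heven n h, hodd (n + 1) (by simpa using h.add_one)]
      exact ⟨by linarith [min_le_left |c₁| |c₂|], by linarith⟩
    · rw [hodd n h, heven (n + 1) (by simpa using h.add_one)]
      exact ⟨by linarith [min_le_right |c₁| |c₂|], by linarith⟩
  rw [hsum _ (by simp), hsum _ (by simp), hsum _ (by simp +contextual), Finset.mul_sum,
    Finset.mul_sum, ← Finset.sum_add_distrib]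
  -- `g k` is `gₙ` for `n = k + 1`.
  set g : ℕ → ℝ := fun k => (1 - |c k.succPNat|) * k * ‖u k.succPNat‖ ^ 2 with hg
  have htel : ∑ k ∈ Finset.range (M : ℕ), (g k - g (k + 1)) = 0 := by
    rw [Finset.sum_range_sub']
    simp [hg, hu1 M le_rfl]
  rw [← add_zero (∑ k ∈ Finset.range (M : ℕ), _ * _), ← htel, ← Finset.sum_add_distrib]
  refine Finset.sum_le_sum fun k _ => ?_
  have h := jacobi_term_bound _ _ (hd k.succPNat).1 k (u k.succPNat) (u (k.succPNat + 1))
  have h2 := (hd k.succPNat).2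
  simp only [hsucc] at h h2 ⊢
  simp only [hg, ← h2, Nat.succPNat_coe, Nat.succ_eq_add_one, Nat.cast_add, Nat.cast_one]
  exact h
end

section
/- Let c₁, c₂ be real numbers with 0 < c₂ < c₁ and c₁ + c₂ = 1. Then there exists a finitely supported sequence v : ℕ₊ → ℝ with v_k ≥ 0 for all k such that c₁ · Σ_{k≥1} (2k−1)(v_k − v_{k+1})² < ((c₁ − c₂)/2) · v₁². -/
/-!
The form `Σ (2k−1)(v_k − v_{k+1})²` is the energy of the potential `v` on a path whose `k`-th edge
has resistance `1/(2k−1)`. The unit current flow stopped after `N` edges has `v_k − v_{k+1}`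
equal to `1/(2k−1)` for `k ≤ N` and to `0` afterwards, so its energy and its value `v₁` both equal
`S_N = Σ_{k≤N} 1/(2k−1)`. The inequality becomes `c₁ S_N < ((c₁ − c₂)/2) S_N²`, which holds for
large `N` because `S_N` diverges (`tendsto_sum_odd_inv`).
-/

theorem tendsto_sum_odd_inv :
    Filter.Tendsto (fun N : ℕ => ∑ i ∈ Finset.range N, 1 / (2 * (i : ℝ) + 1))
      Filter.atTop Filter.atTop := by
  have h := Real.tendsto_sum_range_one_div_nat_succ_atTop.const_mul_atTop
    (show (0 : ℝ) < 1 / 2 by norm_num)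
  refine Filter.tendsto_atTop_mono (fun N => ?_) h
  rw [Finset.mul_sum]
  refine Finset.sum_le_sum fun i _ => ?_
  rw [one_div_mul_one_div]
  exact one_div_le_one_div_of_le (by positivity) (by linarith)

/-- For `0 < c₂ < c₁` with `c₁ + c₂ = 1` there is a finitely supported
nonnegative `v : ℕ+ → ℝ` with `c₁ Σ (2k−1)(v_k − v_{k+1})² < ((c₁ − c₂)/2) v₁²`. -/
theorem stmt_2 (c₁ c₂ : ℝ) (h₂ : 0 < c₂) (h₁₂ : c₂ < c₁) (hsum : c₁ + c₂ = 1) :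
    ∃ v : ℕ+ → ℝ, Set.Finite (Function.support v) ∧ (∀ k : ℕ+, 0 ≤ v k) ∧
      c₁ * (∑' k : ℕ+, (2 * ((k : ℕ) : ℝ) - 1) * (v k - v (k + 1)) ^ 2)
        < ((c₁ - c₂) / 2) * (v 1) ^ 2 := by
  obtain ⟨N, hN⟩ := (tendsto_sum_odd_inv.eventually_gt_atTop (2 * c₁ / (c₁ - c₂))).exists
  let a : ℕ → ℝ := fun i => 1 / (2 * (i : ℝ) + 1)
  -- Natural subtraction truncates only at `k = 0`, which is not in `ℕ+`.
  let w : ℕ → ℝ := fun k => ∑ i ∈ Finset.Ico (k - 1) N, a i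
  have htsum : (∑' k : ℕ+, (2 * ((k : ℕ) : ℝ) - 1) * (w k - w (k + 1)) ^ 2)
      = ∑ i ∈ Finset.range N, a i := by
    rw [tsum_pnat_eq_tsum_succ (f := fun k : ℕ => (2 * (k : ℝ) - 1) * (w k - w (k + 1)) ^ 2),
      tsum_eq_sum (s := Finset.range N)]
    · refine Finset.sum_congr rfl fun i hi => ?_
      have hd : w (i + 1) - w (i + 1 + 1) = a i := by
        simp only [w, Nat.add_sub_cancel]
        rw [Finset.sum_eq_sum_Ico_succ_bot (Finset.mem_range.1 hi)]
        ring
      rw [hd]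
      have : (2 * (i : ℝ) + 1) ≠ 0 := by positivity
      simp only [a]
      push_cast
      field_simp
      ring
    · intro i hi
      have hi' : N ≤ i := by simpa using hi
      simp [w, Finset.Ico_eq_empty_of_le hi', Finset.Ico_eq_empty_of_le (hi'.trans i.le_succ)]
  refine ⟨fun k => w k, ?_, fun k => Finset.sum_nonneg fun i _ => by simp only [a]; positivity, ?_⟩
  · refine (Set.finite_Iic (N.succPNat)).subset fun k hk => ?_
    by_contra hlt
    have hlt' : N + 1 < (k : ℕ) := PNat.coe_lt_coe _ _ |>.2 (not_le.1 hlt)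
    have hle : N ≤ (k : ℕ) - 1 := by omega
    exact hk (by simp [w, Finset.Ico_eq_empty_of_le hle])
  · have h1 : w ((1 : ℕ+) : ℕ) = ∑ i ∈ Finset.range N, a i := by
      simp [w]
    simp only [PNat.add_coe, PNat.one_coe] at htsum h1 ⊢
    rw [htsum, h1]
    have hd : 0 < c₁ - c₂ := by linarith
    change 2 * c₁ / (c₁ - c₂) < ∑ i ∈ Finset.range N, a i at hN
    have hS : 0 < ∑ i ∈ Finset.range N, a i :=
      lt_trans (div_pos (by linarith) hd) hN
    rw [div_lt_iff₀ hd] at hN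
    nlinarith [mul_lt_mul_of_pos_right hN hS]
end

section
/- Let c₁, c₂ be real numbers with 0 < c₁ < c₂ and c₁ + c₂ = 1. Then there exists a finitely supported sequence w : ℕ₊ → ℝ with w_k ≥ 0 for all k such that c₂ · Σ_{k≥1} (2k)(w_k − w_{k+1})² < ((c₁ − c₂)²/2) · w₁². -/
/-!
Take for `w` the tail of the harmonic sum truncated at `N`, that is `w k = ∑_{k ≤ i ≤ N} 1 / i`.
Then `w k - w (k + 1) = 1 / k` for `k ≤ N` and `0` afterwards, so the weighted energy
`∑ 2k (w k - w (k + 1))²` equals `2 H_N`, which is linear in the harmonic number `H_N = w 1`,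
whereas the right-hand side is quadratic in it. As `H_N → ∞` and `c₁ ≠ c₂`, a large `N` works.
-/

/-- The truncated harmonic tail `∑_{n ≤ i ≤ N} 1 / i`; for `n = 1` it is the harmonic number. -/
noncomputable def harmonicTail (N n : ℕ) : ℝ := ∑ i ∈ Finset.Ico n (N + 1), 1 / (i : ℝ)

theorem harmonicTail_nonneg (N n : ℕ) : 0 ≤ harmonicTail N n :=
  Finset.sum_nonneg fun _ _ => by positivity

theorem harmonicTail_eq_zero {N n : ℕ} (h : N < n) : harmonicTail N n = 0 := by
  rw [harmonicTail, Finset.Ico_eq_empty (by omega), Finset.sum_empty]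

theorem harmonicTail_sub_succ {N n : ℕ} (h : n ≤ N) :
    harmonicTail N n - harmonicTail N (n + 1) = 1 / (n : ℝ) := by
  rw [harmonicTail, harmonicTail, Finset.sum_eq_sum_Ico_succ_bot (by omega)]
  ring

theorem harmonicTail_one (N : ℕ) :
    harmonicTail N 1 = ∑ i ∈ Finset.range N, 1 / ((i : ℝ) + 1) := by
  rw [harmonicTail, Finset.sum_Ico_eq_sum_range, Nat.add_sub_cancel]
  refine Finset.sum_congr rfl fun i _ => ?_
  push_cast
  rw [add_comm]

theorem tsum_energy_harmonicTail (N : ℕ) :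
    ∑' k : ℕ+, (2 * ((k : ℕ) : ℝ)) *
      (harmonicTail N (k : ℕ) - harmonicTail N ((k : ℕ) + 1)) ^ 2 = 2 * harmonicTail N 1 := by
  rw [tsum_pnat_eq_tsum_succ (f := fun n : ℕ => (2 * (n : ℝ)) *
    (harmonicTail N n - harmonicTail N (n + 1)) ^ 2), tsum_eq_sum (s := Finset.range N),
    harmonicTail_one, Finset.mul_sum]
  · refine Finset.sum_congr rfl fun i hi => ?_
    rw [harmonicTail_sub_succ (Finset.mem_range.mp hi)]
    push_cast
    field_simp
  · intro i hi
    rw [Finset.mem_range] at hi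
    rw [harmonicTail_eq_zero (by omega), harmonicTail_eq_zero (by omega)]
    ring

/-- For `0 < c₁ < c₂` with `c₁ + c₂ = 1` there is a finitely supported
nonnegative `w : ℕ+ → ℝ` with `c₂ Σ (2k)(w_k − w_{k+1})² < ((c₁ − c₂)²/2) w₁²`. -/
theorem stmt_3 (c₁ c₂ : ℝ) (h₁ : 0 < c₁) (h₁₂ : c₁ < c₂) (hsum : c₁ + c₂ = 1) :
    ∃ w : ℕ+ → ℝ, Set.Finite (Function.support w) ∧ (∀ k : ℕ+, 0 ≤ w k) ∧
      c₂ * (∑' k : ℕ+, (2 * ((k : ℕ) : ℝ)) * (w k - w (k + 1)) ^ 2)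
        < ((c₁ - c₂) ^ 2 / 2) * (w 1) ^ 2 := by
  have hδ : 0 < (c₁ - c₂) ^ 2 := by
    have : c₁ - c₂ ≠ 0 := by linarith
    positivity
  have hc₂ : 0 < c₂ := h₁.trans h₁₂
  obtain ⟨N, hN⟩ := (Real.tendsto_sum_range_one_div_nat_succ_atTop.eventually_gt_atTop
    (4 * c₂ / (c₁ - c₂) ^ 2)).exists
  rw [← harmonicTail_one] at hN
  refine ⟨fun k => harmonicTail N k, ?_, fun k => harmonicTail_nonneg N k, ?_⟩
  · refine Set.Finite.subset
      ((Set.finite_Iic N).preimage (f := fun k : ℕ+ => (k : ℕ)) PNat.coe_injective.injOn) ?_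
    intro k hk
    by_contra hlt
    exact hk (harmonicTail_eq_zero (by simpa using hlt))
  · simp only [PNat.add_coe, PNat.one_coe]
    rw [tsum_energy_harmonicTail]
    have hpos : 0 < harmonicTail N 1 := lt_trans (by positivity) hN
    rw [div_lt_iff₀ hδ] at hN
    nlinarith [mul_lt_mul_of_pos_right hN hpos]
end

section
/- Let c₁, c₂ be real numbers with 0 < c₁ < 1, 0 < c₂ < 1, c₁ + c₂ = 1 and c₁ ≠ c₂. Then there exists a finitely supported sequence u : ℕ₊ → ℂ such that Σ_{k≥1} [ c₁(2k−1)|u_{2k−1} + u_{2k}|² + c₂(2k)|u_{2k} + u_{2k+1}|² ] < ((c₁ − c₂)/2) · Σ_{k≥1} [ |u_{2k−1}|² − |u_{2k}|² ]. -/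
/-!
Write `u_{2k-1} = p_k` and `u_{2k} = -q_k` with `p`, `q` real; it suffices to make
`∑ [c₁(2k-1)(p_k-q_k)² + c₂(2k)(q_k-p_{k+1})² - (d/2)(p_k²-q_k²)]`, with `d = c₁ - c₂`, negative.
On a plateau `q_k = 1`, `p_k = 1 + δ/k`, the `k`-th term is at most `(5δ²/2 - dδ)/k`, which for
`δ = d/5` equals `-d²/(10k)`, whatever the sign of `d`. A plateau of length `N` therefore gains
`d²/10` times a harmonic sum, which is unbounded, whereas bringing `p = q` linearly from `1` down
to `0` over the next `N + 1` indices costs at most `4`, independently of `N`.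
Below, indices are shifted: `i = k - 1 : ℕ`.
-/

/-- The sequence with `u_{2i+1} = P i` and `u_{2i+2} = -Q i`. -/
noncomputable def alternating (P Q : ℕ → ℝ) (n : ℕ+) : ℂ :=
  if (n : ℕ) % 2 = 1 then ((P (((n : ℕ) - 1) / 2) : ℝ) : ℂ)
  else ((-Q (((n : ℕ) - 1) / 2) : ℝ) : ℂ)

lemma alternating_odd (P Q : ℕ → ℝ) (n : ℕ+) (i : ℕ) (h : (n : ℕ) = 2 * i + 1) :
    alternating P Q n = (P i : ℂ) := by
  unfold alternating
  rw [if_pos (by omega), show ((n : ℕ) - 1) / 2 = i by omega]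

lemma alternating_even (P Q : ℕ → ℝ) (n : ℕ+) (i : ℕ) (h : (n : ℕ) = 2 * i + 2) :
    alternating P Q n = ((-Q i : ℝ) : ℂ) := by
  unfold alternating
  rw [if_neg (by omega), show ((n : ℕ) - 1) / 2 = i by omega]

lemma alternating_support (P Q : ℕ → ℝ) (M : ℕ) (hP : ∀ i, M ≤ i → P i = 0)
    (hQ : ∀ i, M ≤ i → Q i = 0) : (Function.support (alternating P Q)).Finite := by
  apply Set.Finite.subset (Set.finite_Iic (Nat.succPNat (2 * M + 1)))
  intro n hn
  by_contra hlt
  have hlt' : 2 * M + 2 < (n : ℕ) := by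
    rw [Set.mem_Iic, not_le, ← PNat.coe_lt_coe] at hlt
    exact hlt
  apply hn
  unfold alternating
  rw [hP _ (by omega), hQ _ (by omega)]
  simp

/-- Reduction of the two series to finite real sums. -/
lemma exists_of_finite_sum (c₁ c₂ : ℝ) (P Q : ℕ → ℝ) (M : ℕ) (hP : ∀ i, M ≤ i → P i = 0)
    (hQ : ∀ i, M ≤ i → Q i = 0)
    (h : ∑ i ∈ Finset.range M, (c₁ * (2 * (i : ℝ) + 1) * (P i - Q i) ^ 2
      + c₂ * (2 * (i : ℝ) + 2) * (Q i - P (i + 1)) ^ 2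
      - (c₁ - c₂) / 2 * (P i ^ 2 - Q i ^ 2)) < 0) :
    ∃ u : ℕ+ → ℂ, Set.Finite (Function.support u) ∧
      (∑' k : ℕ+, (c₁ * (2 * ((k : ℕ) : ℝ) - 1) * ‖u (2 * k - 1) + u (2 * k)‖ ^ 2
          + c₂ * (2 * ((k : ℕ) : ℝ)) * ‖u (2 * k) + u (2 * k + 1)‖ ^ 2))
        < ((c₁ - c₂) / 2) * ∑' k : ℕ+, (‖u (2 * k - 1)‖ ^ 2 - ‖u (2 * k)‖ ^ 2) := by
  refine ⟨alternating P Q, alternating_support P Q M hP hQ, ?_⟩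
  have e1 : ∀ k : ℕ+, alternating P Q (2 * k - 1) = (P ((k : ℕ) - 1) : ℂ) := fun k => by
    apply alternating_odd
    have hk := k.pos
    have hlt : (1 : ℕ+) < 2 * k := by
      rw [← PNat.coe_lt_coe]; push_cast; omega
    rw [PNat.sub_coe, if_pos hlt]
    push_cast
    omega
  have e2 : ∀ k : ℕ+, alternating P Q (2 * k) = ((-Q ((k : ℕ) - 1) : ℝ) : ℂ) := fun k => by
    apply alternating_even
    have hk := k.pos
    push_cast
    omega
  have e3 : ∀ k : ℕ+, alternating P Q (2 * k + 1) = (P (k : ℕ) : ℂ) := fun k => by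
    apply alternating_odd
    push_cast
    omega
  simp only [e1, e2, e3, ← Complex.ofReal_add, Complex.norm_real, Real.norm_eq_abs, sq_abs]
  rw [tsum_pnat_eq_tsum_succ (f := fun k : ℕ =>
      c₁ * (2 * (k : ℝ) - 1) * (P (k - 1) + -Q (k - 1)) ^ 2
          + c₂ * (2 * (k : ℝ)) * (-Q (k - 1) + P k) ^ 2),
    tsum_pnat_eq_tsum_succ (f := fun k : ℕ => P (k - 1) ^ 2 - (-Q (k - 1)) ^ 2),
    tsum_eq_sum (s := Finset.range M), tsum_eq_sum (s := Finset.range M), ← sub_neg,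
    Finset.mul_sum, ← Finset.sum_sub_distrib]
  · refine lt_of_eq_of_lt (Finset.sum_congr rfl fun i _ => ?_) h
    simp only [Nat.add_sub_cancel]
    push_cast
    ring
  · intro i hi
    have hi' : M ≤ i := by simpa using hi
    simp [hP i hi', hQ i hi']
  · intro i hi
    have hi' : M ≤ i := by simpa using hi
    simp [hP i hi', hQ i hi', hP (i + 1) (by omega)]

/-- The trapezoidal profile: `1` up to `N`, then linear down to `0` at `2N + 1`. The subtraction
truncates, so it vanishes from `2N + 1` on. -/
noncomputable def profile (N i : ℕ) : ℝ :=
  if i ≤ N then 1 else ((2 * N + 1 - i : ℕ) : ℝ) / (N + 1)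

/-- The oscillation `δ / k` (with `k = i + 1`), restricted to the plateau. -/
noncomputable def ripple (δ : ℝ) (N i : ℕ) : ℝ :=
  if i < N then δ / (i + 1) else 0

/-- From `N` on, the profile is given by the linear formula (also at `N`, where it equals `1`). -/
lemma profile_of_ge (N i : ℕ) (h : N ≤ i) (h' : i ≤ 2 * N + 1) :
    profile N i = (2 * N + 1 - i) / (N + 1) := by
  unfold profile
  have hN : (N : ℝ) + 1 ≠ 0 := by positivity
  split_ifs with hi
  · obtain rfl : i = N := le_antisymm hi h
    field_simp
    ring
  · rw [Nat.cast_sub h']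
    push_cast
    rfl

lemma ripple_succ_sq_le (δ : ℝ) (N i : ℕ) :
    ripple δ N (i + 1) ^ 2 ≤ (δ / (i + 1)) ^ 2 := by
  unfold ripple
  split_ifs
  · rw [div_pow, div_pow]
    gcongr
    linarith
  · simpa using sq_nonneg (δ / ((i : ℝ) + 1))

theorem stmt_4 (c₁ c₂ : ℝ) (h₁ : 0 < c₁) (h₁' : c₁ < 1) (h₂ : 0 < c₂) (h₂' : c₂ < 1)
    (hsum : c₁ + c₂ = 1) (hne : c₁ ≠ c₂) :
    ∃ u : ℕ+ → ℂ, Set.Finite (Function.support u) ∧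
      (∑' k : ℕ+, (c₁ * (2 * ((k : ℕ) : ℝ) - 1) * ‖u (2 * k - 1) + u (2 * k)‖ ^ 2
          + c₂ * (2 * ((k : ℕ) : ℝ)) * ‖u (2 * k) + u (2 * k + 1)‖ ^ 2))
        < ((c₁ - c₂) / 2) * ∑' k : ℕ+, (‖u (2 * k - 1)‖ ^ 2 - ‖u (2 * k)‖ ^ 2) := by
  obtain ⟨d, hd⟩ : ∃ d, d = c₁ - c₂ := ⟨_, rfl⟩
  have hd0 : 0 < d ^ 2 := by
    have : d ≠ 0 := by rw [hd]; exact sub_ne_zero.mpr hne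
    positivity
  -- The plateau gains `d ^ 2 / 10` times the harmonic sum; this must exceed the descent cost `4`.
  obtain ⟨N, hN⟩ : ∃ N : ℕ, 40 / d ^ 2 < ∑ i ∈ Finset.range N, 1 / ((i : ℝ) + 1) :=
    (Real.tendsto_sum_range_one_div_nat_succ_atTop.eventually_gt_atTop _).exists
  have hvan : ∀ i, N + (N + 1) ≤ i → profile N i = 0 := fun i hi => by
    unfold profile
    rw [if_neg (by omega), show 2 * N + 1 - i = 0 by omega]
    simp
  refine exists_of_finite_sum c₁ c₂ (fun i => profile N i + ripple (d / 5) N i) (profile N)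
    (N + (N + 1)) (fun i hi => ?_) hvan ?_
  · simp [hvan i hi, ripple, show ¬ i < N by omega]
  rw [Finset.sum_range_add, ← hd]
  have plateau : ∀ i ∈ Finset.range N,
      (c₁ * (2 * (i : ℝ) + 1) * (profile N i + ripple (d / 5) N i - profile N i) ^ 2
      + c₂ * (2 * (i : ℝ) + 2) *
        (profile N i - (profile N (i + 1) + ripple (d / 5) N (i + 1))) ^ 2
      - d / 2 * ((profile N i + ripple (d / 5) N i) ^ 2 - profile N i ^ 2))
      ≤ -(d ^ 2 / 10) * (1 / ((i : ℝ) + 1)) := fun i hi => by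
    have hi := Finset.mem_range.mp hi
    have f0 : profile N i = 1 := if_pos hi.le
    have f1 : profile N (i + 1) = 1 := if_pos hi
    have t0 : ripple (d / 5) N i = d / 5 / (i + 1) := if_pos hi
    have t1 := ripple_succ_sq_le (d / 5) N i
    rw [f0, f1, t0]
    set s := ripple (d / 5) N (i + 1)
    obtain ⟨r, hr⟩ : ∃ r : ℝ, r = 1 / ((i : ℝ) + 1) := ⟨_, rfl⟩
    have hi0 : (0 : ℝ) ≤ i := i.cast_nonneg
    have hr0 : 0 ≤ r := by rw [hr]; positivity
    have hr1 : r ≤ 1 := by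
      rw [hr, div_le_one (by positivity)]; linarith
    have hir : ((i : ℝ) + 1) * r = 1 := by rw [hr]; field_simp
    have ht : d / 5 / ((i : ℝ) + 1) = d / 5 * r := by rw [hr]; ring
    rw [ht] at t1 ⊢
    rw [← hr]
    have a1 : c₁ * (2 * (i : ℝ) + 1) * (d / 5 * r) ^ 2
        ≤ c₁ * (2 * ((i : ℝ) + 1)) * (d / 5 * r) ^ 2 := by
      gcongr; linarith
    have a2 : c₂ * (2 * (i : ℝ) + 2) * s ^ 2
        ≤ c₂ * (2 * ((i : ℝ) + 1)) * (d / 5 * r) ^ 2 := by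
      rw [show (2 * (i : ℝ) + 2) = 2 * ((i : ℝ) + 1) by ring]
      gcongr
    have a3 : c₁ * (2 * ((i : ℝ) + 1)) * (d / 5 * r) ^ 2
        + c₂ * (2 * ((i : ℝ) + 1)) * (d / 5 * r) ^ 2 = 2 * (d / 5) ^ 2 * r := by
      linear_combination 2 * ((i : ℝ) + 1) * (d / 5 * r) ^ 2 * hsum
        + 2 * (d / 5) ^ 2 * r * hir
    have a4 : -(d / 2 * (d / 5 * r) ^ 2) ≤ 1 / 2 * (d / 5) ^ 2 * r := by
      have b1 : (d / 5 * r) ^ 2 ≤ (d / 5) ^ 2 * r := by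
        rw [mul_pow]
        exact mul_le_mul_of_nonneg_left (by nlinarith) (sq_nonneg _)
      have b2 : 0 ≤ (1 + d) * (d / 5 * r) ^ 2 :=
        mul_nonneg (by linarith) (sq_nonneg _)
      linarith
    linarith
  have descent : ∀ j ∈ Finset.range (N + 1),
      (c₁ * (2 * ((N + j : ℕ) : ℝ) + 1) *
        (profile N (N + j) + ripple (d / 5) N (N + j) - profile N (N + j)) ^ 2
      + c₂ * (2 * ((N + j : ℕ) : ℝ) + 2) *
        (profile N (N + j) - (profile N (N + j + 1) + ripple (d / 5) N (N + j + 1))) ^ 2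
      - d / 2 * ((profile N (N + j) + ripple (d / 5) N (N + j)) ^ 2 - profile N (N + j) ^ 2))
      ≤ 4 / ((N : ℝ) + 1) := fun j hj => by
    have hj := Finset.mem_range.mp hj
    have t0 : ripple (d / 5) N (N + j) = 0 := if_neg (by omega)
    have t1 : ripple (d / 5) N (N + j + 1) = 0 := if_neg (by omega)
    have hf : profile N (N + j) - profile N (N + j + 1) = 1 / ((N : ℝ) + 1) := by
      rw [profile_of_ge N (N + j) (by omega) (by omega),
        profile_of_ge N (N + j + 1) (by omega) (by omega)]
      push_cast
      ring
    rw [t0, t1, add_zero, add_zero, hf]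
    have hjN : (j : ℝ) ≤ N := by exact_mod_cast Nat.lt_succ_iff.mp hj
    have hNpos : (0 : ℝ) < N + 1 := by positivity
    have hc : c₂ * (2 * ((N + j : ℕ) : ℝ) + 2) ≤ 4 * ((N : ℝ) + 1) := by
      push_cast
      have hj0 : (0 : ℝ) ≤ j := j.cast_nonneg
      nlinarith
    calc _ = c₂ * (2 * ((N + j : ℕ) : ℝ) + 2) * (1 / ((N : ℝ) + 1)) ^ 2 := by ring
      _ ≤ 4 * ((N : ℝ) + 1) * (1 / ((N : ℝ) + 1)) ^ 2 := by gcongr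
      _ = 4 / ((N : ℝ) + 1) := by field_simp
  have s1 := Finset.sum_le_sum plateau
  have s2 := Finset.sum_le_sum descent
  rw [← Finset.mul_sum] at s1
  rw [Finset.sum_const, Finset.card_range, nsmul_eq_mul,
    show ((N + 1 : ℕ) : ℝ) * (4 / ((N : ℝ) + 1)) = 4 by push_cast; field_simp] at s2
  rw [div_lt_iff₀ hd0] at hN
  refine lt_of_le_of_lt (add_le_add s1 s2) ?_
  linarith
end

section
/- Let c₁, c₂ be real numbers with 0 < c₁, 0 < c₂, c₁ + c₂ = 1 and c₁ ≠ c₂, and let (c_n)_{n≥1} be the 2-periodic sequence with c_n = c₁ for odd n and c_n = c₂ for even n. Then there exists a finitely supported sequence u : ℕ₊ → ℂ, not identically zero, such that the Jacobi quadratic form satisfies Q(u) = Σ_{n≥1} n|u_n|² + 2 Σ_{n≥1} c_n n Re(u_n · conj(u_{n+1})) < (1/2) · Σ_{n≥1} |u_n|². -/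
/-!
Write `uₙ = (-1)ⁿ⁻¹ vₙ` with `v` real. Since `c₁ + c₂ = 1`, completing squares shows that
`Q(u) - ½‖u‖²` equals `Σ (cₙ₋₁ - ½) vₙ² + Σ cₙ n (vₙ₊₁ - vₙ)²` with `c₀ = c₂`. The potential
`cₙ₋₁ - ½` alternates in sign, so it cancels when `v` is constant on the pairs `{2k+1, 2k+2}`, say
equal to `gₖ`. Take for `g` the truncated logarithm `gₖ = Σ_{k ≤ j < N} 1/(j+1)`: with
`L = g₀` its energy `Σ 2(k+1) c₂ (gₖ - gₖ₊₁)²` is only `2 c₂ L`. Changing the single value `v₁` from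
`L` to `2 c₁ L` contributes exactly `-2 (c₁ - ½)² L²`. As the harmonic series diverges,
`-2 (c₁ - ½)² L² + 2 c₂ L < 0` for `N` large. The identity is `sum_form_blocks`.
-/

/-- The truncated logarithm `Σ_{k ≤ j < N} 1/(j+1)`; it vanishes for `k ≥ N`. -/
noncomputable def logCutoff (N k : ℕ) : ℝ := ∑ j ∈ Finset.Ico k N, 1 / ((j : ℝ) + 1)

lemma logCutoff_of_le {N k : ℕ} (h : N ≤ k) : logCutoff N k = 0 := by
  simp [logCutoff, Finset.Ico_eq_empty_of_le h]

lemma logCutoff_succ {N k : ℕ} (h : k < N) :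
    logCutoff N (k + 1) = logCutoff N k - 1 / ((k : ℝ) + 1) := by
  rw [logCutoff, logCutoff, Finset.sum_eq_sum_Ico_succ_bot h]; ring

/-- The test sequence, indexed from `0` (so that the entry `m` is `u_{m+1}`): alternating signs, the
value `gₖ` on the pair `{2k, 2k+1}`, and the entry `0` modified to `2 a g₀`. -/
noncomputable def testSeq (a : ℝ) (N m : ℕ) : ℝ :=
  if m = 0 then 2 * a * logCutoff N 0 else (-1) ^ m * logCutoff N (m / 2)

lemma testSeq_zero (a : ℝ) (N : ℕ) : testSeq a N 0 = 2 * a * logCutoff N 0 := by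
  simp [testSeq]

lemma testSeq_even (a : ℝ) (N k : ℕ) : testSeq a N (2 * (k + 1)) = logCutoff N (k + 1) := by
  simp [testSeq, pow_mul]

lemma testSeq_odd (a : ℝ) (N k : ℕ) : testSeq a N (2 * k + 1) = -logCutoff N k := by
  have : (2 * k + 1) / 2 = k := by omega
  simp [testSeq, pow_succ, pow_mul, this]

lemma testSeq_of_le (a : ℝ) {N m : ℕ} (h : 2 * N ≤ m) : testSeq a N m = 0 := by
  unfold testSeq
  rw [logCutoff_of_le (show N ≤ m / 2 by omega)]
  split_ifs with h0
  · rw [logCutoff_of_le (by omega), mul_zero]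
  · simp

/-- Partial sums over `K + 1` pairs of the density of `Q - ½‖·‖²` at the test sequence. The last term
is the boundary term of the telescoping, which vanishes for `K + 1 = N`. -/
lemma sum_form_blocks (c₁ c₂ : ℝ) (hsum : c₁ + c₂ = 1) (d : ℕ → ℝ)
    (hd0 : ∀ k, d (2 * k) = c₁) (hd1 : ∀ k, d (2 * k + 1) = c₂) (N K : ℕ) (hK : K + 1 ≤ N) :
    ∑ m ∈ Finset.range (2 * (K + 1)), (((m : ℝ) + 1 - 1 / 2) * testSeq c₁ N m ^ 2
        + 2 * (d m * ((m : ℝ) + 1) * (testSeq c₁ N m * testSeq c₁ N (m + 1)))) =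
      -2 * (c₁ - 1 / 2) ^ 2 * logCutoff N 0 ^ 2
        + 2 * c₂ * (logCutoff N 0 - logCutoff N (K + 1))
        - 2 * c₂ * ((K : ℝ) + 1) * logCutoff N (K + 1) ^ 2 := by
  obtain rfl : c₂ = 1 - c₁ := by linarith
  induction K with
  | zero =>
    have e0 := hd0 0
    have e1 := hd1 0
    have t1 := testSeq_odd c₁ N 0
    have t2 := testSeq_even c₁ N 0
    have g1 := logCutoff_succ (N := N) (k := 0) (by omega)
    norm_num at e0 e1 t1 t2 g1
    norm_num [Finset.sum_range_succ]
    rw [e0, e1, t1, t2, testSeq_zero, g1]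
    ring
  | succ K ih =>
    rw [show 2 * (K + 1 + 1) = 2 * (K + 1) + 1 + 1 by ring, Finset.sum_range_succ,
      Finset.sum_range_succ, ih (by omega), hd0, hd1,
      show 2 * (K + 1) + 1 + 1 = 2 * (K + 1 + 1) by ring,
      testSeq_even, testSeq_even, testSeq_odd, logCutoff_succ (N := N) (k := K + 1) (by omega)]
    push_cast
    have : (K : ℝ) + 1 + 1 ≠ 0 := by positivity
    field_simp
    ring

/-- A series over `ℕ+` whose terms vanish past `M` is a sum over `range M` after the index shift. -/
lemma tsum_pnat_eq_sum_range (f : ℕ+ → ℝ) (M : ℕ) (hf : ∀ m, M ≤ m → f m.succPNat = 0) :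
    ∑' n, f n = ∑ m ∈ Finset.range M, f m.succPNat := by
  rw [← Equiv.tsum_eq Equiv.pnatEquivNat.symm f]
  exact tsum_eq_sum fun m hm => hf m (by simpa using hm)

theorem stmt_5 (c₁ c₂ : ℝ) (h₁ : 0 < c₁) (h₂ : 0 < c₂) (hsum : c₁ + c₂ = 1)
    (hne : c₁ ≠ c₂) (c : ℕ+ → ℝ)
    (hodd : ∀ n : ℕ+, Odd (n : ℕ) → c n = c₁)
    (heven : ∀ n : ℕ+, Even (n : ℕ) → c n = c₂) :
    ∃ u : ℕ+ → ℂ, Set.Finite (Function.support u) ∧ u ≠ 0 ∧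
      (∑' n : ℕ+, ((n : ℕ) : ℝ) * ‖u n‖ ^ 2)
          + 2 * (∑' n : ℕ+, c n * ((n : ℕ) : ℝ) * (u n * (starRingEnd ℂ) (u (n + 1))).re)
        < (1 / 2) * ∑' n : ℕ+, ‖u n‖ ^ 2 := by
  have hδ : 0 < (c₁ - 1 / 2) ^ 2 := by
    have : c₁ - 1 / 2 ≠ 0 := fun h => hne (by linarith)
    positivity
  obtain ⟨N, hN0, hN⟩ :=
    ((Filter.eventually_gt_atTop 0).and
      (Real.tendsto_sum_range_one_div_nat_succ_atTop.eventually_gt_atTop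
        (c₂ / (c₁ - 1 / 2) ^ 2))).exists
  have hL : c₂ / (c₁ - 1 / 2) ^ 2 < logCutoff N 0 := by simpa [logCutoff] using hN
  have hLpos : 0 < logCutoff N 0 := (by positivity : 0 < c₂ / (c₁ - 1 / 2) ^ 2).trans hL
  obtain ⟨K, rfl⟩ : ∃ K, N = K + 1 := ⟨N - 1, by omega⟩
  have hfin : ∀ m, 2 * (K + 1) ≤ m → testSeq c₁ (K + 1) m = 0 := fun m => testSeq_of_le c₁
  have hsucc : ∀ m : ℕ, (m.succPNat + 1).natPred = m + 1 := fun m => rfl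
  refine ⟨fun n => (testSeq c₁ (K + 1) n.natPred : ℂ), ?_, ?_, ?_⟩
  · refine ((Finset.range (2 * (K + 1))).finite_toSet.preimage
      (PNat.natPred_injective.injOn)).subset fun n hn => ?_
    by_contra h
    exact hn (by simp [hfin n.natPred (by simpa using h)])
  · intro h
    have h0 := congrFun h 1
    simp only [PNat.natPred, PNat.one_coe, Pi.zero_apply, Complex.ofReal_eq_zero, Nat.sub_self,
      testSeq_zero] at h0
    have : 0 < 2 * c₁ * logCutoff (K + 1) 0 := by positivity
    linarith
  · have key := sum_form_blocks c₁ c₂ hsum (fun m => c m.succPNat)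
      (fun k => hodd _ ⟨k, by simp⟩) (fun k => heven _ ⟨k + 1, by simp; ring⟩) (K + 1) K le_rfl
    rw [logCutoff_of_le le_rfl] at key
    rw [tsum_pnat_eq_sum_range _ (2 * (K + 1)) fun m hm => by simp [hfin m hm],
      tsum_pnat_eq_sum_range _ (2 * (K + 1)) fun m hm => by simp [hfin m hm],
      tsum_pnat_eq_sum_range _ (2 * (K + 1)) fun m hm => by simp [hfin m hm]]
    rw [← sub_neg, Finset.mul_sum, Finset.mul_sum, ← Finset.sum_add_distrib,
      ← Finset.sum_sub_distrib]
    rw [div_lt_iff₀ hδ] at hL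
    have hneg := key.trans_lt (b := _) (c := 0) (by nlinarith)
    refine lt_of_eq_of_lt (Finset.sum_congr rfl fun m _ => ?_) hneg
    simp only [Nat.natPred_succPNat, hsucc, Complex.conj_ofReal, ← Complex.ofReal_mul,
      Complex.ofReal_re, Complex.norm_real, Real.norm_eq_abs, sq_abs, Nat.succPNat_coe]
    push_cast
    ring
end

section
/- For each integer N ≥ 1 define the finitely supported sequence v^{(N)} : ℕ₊ → ℝ by v^{(N)}_n = Σ_{k=n}^{N} 1/k for n ≤ N and v^{(N)}_n = 0 for n > N. Then lim_{N→∞} ( Σ_{k≥1} (2k)(v^{(N)}_k − v^{(N)}_{k+1})² ) / ( v^{(N)}_1 )² = 0. -/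
/-!
Consecutive tails differ by `v_k - v_{k+1} = 1/k` for `k ≤ N` and by `0` for `k > N`, so the
weighted sum of squares equals `∑_{k ≤ N} 2k / k² = 2 v_1`. The ratio is therefore
`2 / v_1`, with `v_1` the `N`-th harmonic number, and the harmonic series diverges.
-/

/-- For `n > N` both intervals are empty, and the difference is `0`. -/
lemma sum_Icc_sub_sum_Icc_succ (N n : ℕ) :
    (∑ k ∈ Finset.Icc n N, (1 : ℝ) / k) - ∑ k ∈ Finset.Icc (n + 1) N, (1 : ℝ) / k =
      if n ≤ N then (1 : ℝ) / n else 0 := by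
  split_ifs with h
  · rw [← Finset.insert_Icc_add_one_left_eq_Icc h, Finset.sum_insert (by simp)]
    ring
  · rw [Finset.Icc_eq_empty h, Finset.Icc_eq_empty (by omega)]
    simp

lemma sum_Icc_one_eq_sum_range (N : ℕ) :
    ∑ k ∈ Finset.Icc 1 N, (1 : ℝ) / k = ∑ i ∈ Finset.range N, 1 / ((i : ℝ) + 1) := by
  rw [← Finset.Ico_add_one_right_eq_Icc, Finset.sum_Ico_eq_sum_range]
  refine Finset.sum_congr (by simp) fun i _ => ?_
  push_cast
  rw [add_comm]

/-- The weighted sum of squared differences is exactly twice the harmonic number. -/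
lemma tsum_weighted_sq_sub (v : ℕ → ℕ+ → ℝ)
    (hv : ∀ N : ℕ, ∀ n : ℕ+, v N n = ∑ k ∈ Finset.Icc (n : ℕ) N, (1 : ℝ) / k) (N : ℕ) :
    ∑' k : ℕ+, (2 * ((k : ℕ) : ℝ)) * (v N k - v N (k + 1)) ^ 2 =
      2 * ∑ i ∈ Finset.range N, 1 / ((i : ℝ) + 1) := by
  have h1 : ∀ k : ℕ+, (2 * ((k : ℕ) : ℝ)) * (v N k - v N (k + 1)) ^ 2 =
      (fun n : ℕ => if n ≤ N then 2 * ((1 : ℝ) / n) else 0) k := by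
    intro k
    have hk : ((k : ℕ) : ℝ) ≠ 0 := by exact_mod_cast k.ne_zero
    rw [hv, hv, PNat.add_coe, PNat.one_coe, sum_Icc_sub_sum_Icc_succ]
    dsimp only
    split_ifs
    · field_simp
    · simp
  rw [tsum_congr h1, tsum_pnat_eq_tsum_succ
      (f := fun n : ℕ => if n ≤ N then 2 * ((1 : ℝ) / n) else 0),
    tsum_eq_sum (s := Finset.range N), Finset.mul_sum]
  · refine Finset.sum_congr rfl fun i hi => ?_
    rw [if_pos (Nat.succ_le_of_lt (Finset.mem_range.mp hi))]
    push_cast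
    rfl
  · intro i hi
    rw [if_neg]
    simpa using hi

/-- With `v^{(N)}_n = Σ_{k=n}^{N} 1/k` (and `v^{(N)}_n = 0` for `n > N`),
the ratio `(Σ_k (2k)(v^{(N)}_k − v^{(N)}_{k+1})²) / (v^{(N)}_1)²` tends to `0` as
`N → ∞`. -/
theorem stmt_6 (v : ℕ → ℕ+ → ℝ)
    (hv : ∀ N : ℕ, ∀ n : ℕ+, v N n = ∑ k ∈ Finset.Icc (n : ℕ) N, (1 : ℝ) / k) :
    Filter.Tendsto
      (fun N : ℕ =>
        (∑' k : ℕ+, (2 * ((k : ℕ) : ℝ)) * (v N k - v N (k + 1)) ^ 2) / (v N 1) ^ 2)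
      Filter.atTop (nhds 0) := by
  have h : Filter.Tendsto (fun N : ℕ => 2 / ∑ i ∈ Finset.range N, 1 / ((i : ℝ) + 1))
      Filter.atTop (nhds 0) :=
    Real.tendsto_sum_range_one_div_nat_succ_atTop.const_div_atTop 2
  refine h.congr fun N => ?_
  rw [tsum_weighted_sq_sub v hv N, hv N 1, PNat.one_coe, sum_Icc_one_eq_sum_range]
  -- At `N = 0` the harmonic number vanishes and both sides are `0` by the convention `x / 0 = 0`.
  rcases eq_or_ne (∑ i ∈ Finset.range N, 1 / ((i : ℝ) + 1)) 0 with h0 | h0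
  · rw [h0]
    simp
  · field_simp
end

section
/- Let c₁, c₂ be real numbers with |c₁| + |c₂| = 1 and c₁c₂ ≠ 0, and let (c_n)_{n≥1} be the 2-periodic sequence with c_n = c₁ for odd n and c_n = c₂ for even n. Let 0 < ε < 1/2 and let N be a natural number with N ≥ 1/ε. Then for every finitely supported sequence u : ℕ₊ → ℂ with u_n = 0 for all n ≤ N, the Jacobi quadratic form satisfies Q(u) = Σ_{n≥1} n|u_n|² + 2 Σ_{n≥1} c_n n Re(u_n · conj(u_{n+1})) ≥ (1/2 − ε) · Σ_{n≥1} |u_n|². -/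
/-!
Write `aₙ = |cₙ|` and `xₙ = ‖uₙ‖`. For `n > N` the weighted AM-GM inequality with weight
`1 - 1/(2n)` gives `2 n xₙ xₙ₊₁ ≤ (n - 1/2) xₙ² + (n + 1/2 + ε) xₙ₊₁²`, because
`(n - 1/2)(n + 1/2 + ε) ≥ n²` as soon as `ε (n - 1/2) ≥ 1/4` (`two_mul_le_weighted`).
Since `aₙ + aₙ₊₁ = 1`, the second term, multiplied by `aₙ`, is `F (n + 1)` where
`F n = (1 - aₙ)(n - 1/2 + ε) xₙ²`. Shifting the index in the sum of `F` then leaves the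
coefficient `n - aₙ (n - 1/2) - (1 - aₙ)(n - 1/2 + ε) = 1/2 - (1 - aₙ) ε ≥ 1/2 - ε`
in front of each `xₙ²`. For `n ≤ N` the entry `uₙ` vanishes and only `F (n + 1) ≥ 0` is needed.
-/

/-- Weighted AM-GM: the cross term is dominated because the coefficients on the right satisfy
`(m - 1/2) (m + 1/2 + ε) ≥ m²`, which is equivalent to the hypothesis `h`. -/
theorem two_mul_le_weighted {m ε x y : ℝ} (hm : 1 / 2 < m) (h : 1 / 4 ≤ ε * (m - 1 / 2)) :
    2 * m * (x * y) ≤ (m - 1 / 2) * x ^ 2 + (m + 1 / 2 + ε) * y ^ 2 := by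
  have hp : 0 < m - 1 / 2 := by linarith
  have h2 : 0 ≤ (ε * (m - 1 / 2) - 1 / 4) * y ^ 2 :=
    mul_nonneg (by linarith) (sq_nonneg y)
  -- Multiplied by `m - 1/2`, the difference of the sides is a square plus the term in `h2`.
  refine le_of_mul_le_mul_left ?_ hp
  nlinarith [sq_nonneg ((m - 1 / 2) * x - m * y)]

/-- If `|c₁| + |c₂| = 1`, `c₁c₂ ≠ 0`, `0 < ε < 1/2` and `N ≥ 1/ε`, then
every finitely supported `u : ℕ+ → ℂ` vanishing on indices `n ≤ N` satisfies
`Q(u) = Σ n|uₙ|² + 2 Σ cₙ n Re(uₙ conj u_{n+1}) ≥ (1/2 − ε) Σ |uₙ|²`. -/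
theorem stmt_7 (c₁ c₂ : ℝ) (habs : |c₁| + |c₂| = 1) (hne : c₁ * c₂ ≠ 0)
    (c : ℕ+ → ℝ)
    (hodd : ∀ n : ℕ+, Odd (n : ℕ) → c n = c₁)
    (heven : ∀ n : ℕ+, Even (n : ℕ) → c n = c₂)
    (ε : ℝ) (hε : 0 < ε) (hε' : ε < 1 / 2)
    (N : ℕ) (hN : 1 / ε ≤ (N : ℝ))
    (u : ℕ+ → ℂ) (hu : Set.Finite (Function.support u))
    (hzero : ∀ n : ℕ+, (n : ℕ) ≤ N → u n = 0) :
    (1 / 2 - ε) * ∑' n : ℕ+, ‖u n‖ ^ 2 ≤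
      (∑' n : ℕ+, ((n : ℕ) : ℝ) * ‖u n‖ ^ 2)
        + 2 * ∑' n : ℕ+, c n * ((n : ℕ) : ℝ) * (u n * (starRingEnd ℂ) (u (n + 1))).re := by
  have hsum : ∀ g : ℕ+ → ℝ, (∀ n, u n = 0 → g n = 0) → Summable g := fun g hg =>
    summable_of_hasFiniteSupport (hu.subset fun n hn hun => hn (hg n hun))
  have hshift : ∀ n : ℕ+, |c n| + |c (n + 1)| = 1 := by
    intro n
    rcases Nat.even_or_odd (n : ℕ) with h | h
    · rw [heven n h, hodd (n + 1) (by rw [PNat.add_coe]; exact h.add_one)]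
      linarith
    · rw [hodd n h, heven (n + 1) (by rw [PNat.add_coe]; exact h.add_one)]
      exact habs
  have hle : ∀ n : ℕ+, |c n| ≤ 1 := fun n => by
    linarith [hshift n, abs_nonneg (c (n + 1))]
  have hone : ∀ n : ℕ+, (1 : ℝ) ≤ ((n : ℕ) : ℝ) := fun n => by exact_mod_cast Nat.succ_le_of_lt n.pos
  set F : ℕ+ → ℝ := fun n => (1 - |c n|) * ((n : ℕ) - 1 / 2 + ε) * ‖u n‖ ^ 2 with hF
  have hF0 : ∀ n, 0 ≤ F n := fun n =>
    mul_nonneg (mul_nonneg (by linarith [hle n]) (by linarith [hone n])) (sq_nonneg _)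
  have hFsum : Summable F := hsum F fun n hn => by simp [hF, hn]
  have hFsum' : Summable fun n : ℕ+ => F (n + 1) :=
    hFsum.comp_injective (add_left_injective (1 : ℕ+))
  have hFle : ∑' n : ℕ+, F (n + 1) ≤ ∑' n, F n :=
    tsum_comp_le_tsum_of_inj hFsum hF0 (add_left_injective (1 : ℕ+))
  have hFnext : ∀ n : ℕ+, F (n + 1) = |c n| * ((n : ℕ) + 1 / 2 + ε) * ‖u (n + 1)‖ ^ 2 := by
    intro n
    have : 1 - |c (n + 1)| = |c n| := by linarith [hshift n]
    simp only [hF, this, PNat.add_coe, PNat.one_coe]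
    push_cast
    ring
  -- The one-term estimate; `F` is kept on both sides so that summation only shifts an index.
  have hpt : ∀ n : ℕ+, (1 / 2 - ε) * ‖u n‖ ^ 2 + F n ≤
      ((n : ℕ) : ℝ) * ‖u n‖ ^ 2
        + 2 * (c n * ((n : ℕ) : ℝ) * (u n * (starRingEnd ℂ) (u (n + 1))).re) + F (n + 1) := by
    intro n
    by_cases hn : (n : ℕ) ≤ N
    · have h0 := hzero n hn
      have := hF0 (n + 1)
      simpa [hF, h0] using this
    · have hnN : (N : ℝ) + 1 ≤ ((n : ℕ) : ℝ) := by
        exact_mod_cast Nat.succ_le_of_lt (not_le.mp hn)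
      have hεN : 1 ≤ ε * N := by
        rw [div_le_iff₀ hε] at hN
        linarith
      have hw := two_mul_le_weighted (m := ((n : ℕ) : ℝ)) (ε := ε) (x := ‖u n‖)
        (y := ‖u (n + 1)‖) (by linarith [hone n]) (by nlinarith)
      have hre : |(u n * (starRingEnd ℂ) (u (n + 1))).re| ≤ ‖u n‖ * ‖u (n + 1)‖ := by
        simpa using Complex.abs_re_le_norm (u n * (starRingEnd ℂ) (u (n + 1)))
      have hcre : -(|c n| * (‖u n‖ * ‖u (n + 1)‖)) ≤
          c n * (u n * (starRingEnd ℂ) (u (n + 1))).re := by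
        refine (neg_le_neg ?_).trans (neg_abs_le _)
        rw [abs_mul]
        exact mul_le_mul_of_nonneg_left hre (abs_nonneg _)
      have h1 := mul_le_mul_of_nonneg_left hcre (by linarith [hone n] : 0 ≤ ((n : ℕ) : ℝ))
      have h2 := mul_le_mul_of_nonneg_left hw (abs_nonneg (c n))
      have h3 : 0 ≤ |c n| * ε * ‖u n‖ ^ 2 := by positivity
      rw [hFnext n]
      simp only [hF]
      linarith
  have hA := hsum (fun n => (1 / 2 - ε) * ‖u n‖ ^ 2) fun n hn => by simp [hn]
  have hB := hsum (fun n => ((n : ℕ) : ℝ) * ‖u n‖ ^ 2) fun n hn => by simp [hn]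
  have hC := hsum
    (fun n => 2 * (c n * ((n : ℕ) : ℝ) * (u n * (starRingEnd ℂ) (u (n + 1))).re))
    fun n hn => by simp [hn]
  have hmain := (hA.add hFsum).tsum_le_tsum hpt ((hB.add hC).add hFsum')
  rw [hA.tsum_add hFsum, (hB.add hC).tsum_add hFsum', hB.tsum_add hC, tsum_mul_left,
    tsum_mul_left] at hmain
  linarith
end

section
/- Let c > 0 be a real number and for n ≥ 1 define λ_n^+ = (4n−1 + √(4c²(2n−1)² + 1))/2. Then the sequence λ_n^+ − ( 2(1+c)n − (1/2 + c) + 1/(16cn) ) is O(1/n²) as n → ∞. -/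
/-!
With `a = 2c(2n-1)` the radicand is `a² + 1`, and `√(a² + 1) = a + 1/(2a) + O(1/a³)`
(`abs_sqrt_sq_add_one_sub_le`). The terms `(4n - 1 + a)/2` give exactly the linear part, and
`1/(4a) = 1/(8c(2n-1))` differs from `1/(16cn)` by `1/(16cn(2n-1)) = O(1/n²)`.
-/

open Asymptotics

/-- Quantitative second-order expansion of `√(a² + 1)` for large `a`: with `s = √(a² + 1)`,
rationalizing twice gives `a + 1/(2a) - s = 1/(2a(s+a)²)`, and `s ≥ a`. -/
lemma abs_sqrt_sq_add_one_sub_le {a : ℝ} (ha : 0 < a) :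
    |Real.sqrt (a ^ 2 + 1) - (a + 1 / (2 * a))| ≤ 1 / (8 * a ^ 3) := by
  have hs : Real.sqrt (a ^ 2 + 1) ^ 2 = a ^ 2 + 1 := Real.sq_sqrt (by positivity)
  have hsa : a ≤ Real.sqrt (a ^ 2 + 1) := Real.le_sqrt_of_sq_le (by linarith)
  set s := Real.sqrt (a ^ 2 + 1)
  have hpos : 0 < s + a := by linarith
  have key : s - (a + 1 / (2 * a)) = -(1 / (2 * a * (s + a) ^ 2)) := by
    have h1 : s - a = 1 / (s + a) := by
      rw [eq_div_iff hpos.ne']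
      linear_combination hs
    have h2 : s = a + 1 / (s + a) := by linarith
    have h3 : 1 / (2 * a) - 1 / (s + a) = (s - a) / (2 * a * (s + a)) := by
      field_simp
      ring
    have h4 : (s - a) / (2 * a * (s + a)) = 1 / (2 * a * (s + a) ^ 2) := by
      rw [h1]
      field_simp
    linarith
  rw [key, abs_neg, abs_of_pos (by positivity)]
  apply one_div_le_one_div_of_le (by positivity)
  calc 8 * a ^ 3 = 2 * a * (a + a) ^ 2 := by ring
    _ ≤ 2 * a * (s + a) ^ 2 := by gcongr

/-- For `c > 0`, with `λₙ⁺ = (4n−1 + √(4c²(2n−1)² + 1))/2`, the sequence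
`λₙ⁺ − (2(1+c)n − (1/2 + c) + 1/(16cn))` is `O(1/n²)` as `n → ∞`. -/
theorem stmt_9 (c : ℝ) (hc : 0 < c) :
    (fun n : ℕ =>
        (4 * (n : ℝ) - 1 + Real.sqrt (4 * c ^ 2 * (2 * (n : ℝ) - 1) ^ 2 + 1)) / 2
          - (2 * (1 + c) * (n : ℝ) - (1 / 2 + c) + 1 / (16 * c * (n : ℝ))))
      =O[Filter.atTop] fun n : ℕ => 1 / (n : ℝ) ^ 2 := by
  refine IsBigO.of_bound (1 / (128 * c ^ 3) + 1 / (16 * c)) ?_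
  filter_upwards [Filter.eventually_ge_atTop 1] with n hn
  have hx : (1 : ℝ) ≤ n := by exact_mod_cast hn
  generalize (n : ℝ) = x at hx
  have hx0 : 0 < x := by linarith
  have hy : x ≤ 2 * x - 1 := by linarith
  have hy0 : 0 < 2 * x - 1 := by linarith
  have hrad : 4 * c ^ 2 * (2 * x - 1) ^ 2 + 1 = (2 * c * (2 * x - 1)) ^ 2 + 1 := by ring
  have hsqrt := abs_sqrt_sq_add_one_sub_le (a := 2 * c * (2 * x - 1)) (by positivity)
  rw [hrad]
  set s := Real.sqrt ((2 * c * (2 * x - 1)) ^ 2 + 1)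
  have hsplit : (4 * x - 1 + s) / 2 - (2 * (1 + c) * x - (1 / 2 + c) + 1 / (16 * c * x))
      = (s - (2 * c * (2 * x - 1) + 1 / (2 * (2 * c * (2 * x - 1))))) / 2
        + 1 / (16 * c * (x * (2 * x - 1))) := by
    have h : 1 / (2 * (2 * c * (2 * x - 1))) / 2 - 1 / (16 * c * x)
        = 1 / (16 * c * (x * (2 * x - 1))) := by
      field_simp
      ring
    linear_combination h
  have hcube : 1 / (8 * (2 * c * (2 * x - 1)) ^ 3) ≤ 1 / (64 * c ^ 3 * x ^ 2) := by
    apply one_div_le_one_div_of_le (by positivity)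
    calc 64 * c ^ 3 * x ^ 2 ≤ 64 * c ^ 3 * x ^ 3 := by gcongr <;> norm_num
      _ = 8 * (2 * c * x) ^ 3 := by ring
      _ ≤ 8 * (2 * c * (2 * x - 1)) ^ 3 := by gcongr
  have hlin : 1 / (16 * c * (x * (2 * x - 1))) ≤ 1 / (16 * c * x ^ 2) := by
    apply one_div_le_one_div_of_le (by positivity)
    rw [sq]
    gcongr
  have hlin0 : 0 < 1 / (16 * c * (x * (2 * x - 1))) := by positivity
  have hconst : (1 / (128 * c ^ 3) + 1 / (16 * c)) * (1 / x ^ 2)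
      = 1 / (64 * c ^ 3 * x ^ 2) / 2 + 1 / (16 * c * x ^ 2) := by
    field_simp
    ring
  rw [Real.norm_eq_abs, Real.norm_of_nonneg (by positivity), hsplit, hconst]
  have hb := abs_le.mp (hsqrt.trans hcube)
  exact abs_le.mpr ⟨by linarith [hb.1], by linarith [hb.2]⟩
end

section
/- Let c > 0 be a real number and for n ≥ 1 define λ_n^- = (4n−1 − √(4c²(2n−1)² + 1))/2. Then the sequence λ_n^- − ( 2(1−c)n + (c − 1/2) − 1/(16cn) ) is O(1/n²) as n → ∞. -/
/-!
With `m = 2n - 1` and `δ = √(4c²m² + 1) - 2cm`, the definition of `δ` gives `δ (δ + 4cm) = 1`.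
Hence `0 < δ ≤ 1/(4cm)` and `1/(4cm) - δ = δ²/(4cm)`, so the sequence equals exactly
`δ²/(8cm) - 1/(16cnm)`. As `m ≥ n` for `n ≥ 1`, the first term is `O(1/n³)` and the second
`O(1/n²)`.
-/

open Asymptotics

/-- For `c > 0`, with `λₙ⁻ = (4n−1 − √(4c²(2n−1)² + 1))/2`, the sequence
`λₙ⁻ − (2(1−c)n + (c − 1/2) − 1/(16cn))` is `O(1/n²)` as `n → ∞`. -/
theorem stmt_10 (c : ℝ) (hc : 0 < c) :
    (fun n : ℕ =>
        (4 * (n : ℝ) - 1 - Real.sqrt (4 * c ^ 2 * (2 * (n : ℝ) - 1) ^ 2 + 1)) / 2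
          - (2 * (1 - c) * (n : ℝ) + (c - 1 / 2) - 1 / (16 * c * (n : ℝ))))
      =O[Filter.atTop] fun n : ℕ => 1 / (n : ℝ) ^ 2 := by
  apply IsBigO.of_bound (1 / (128 * c ^ 3) + 1 / (16 * c))
  filter_upwards [Filter.eventually_ge_atTop 1] with k hk
  have hn : (1 : ℝ) ≤ k := by exact_mod_cast hk
  generalize (k : ℝ) = n at hn
  have hn0 : 0 < n := by linarith
  obtain ⟨m, hm⟩ : ∃ m, m = 2 * n - 1 := ⟨_, rfl⟩
  have hmn : n ≤ m := by linarith
  have hm0 : 0 < m := by linarith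
  rw [← hm]
  obtain ⟨δ, hδ⟩ : ∃ δ, δ = Real.sqrt (4 * c ^ 2 * m ^ 2 + 1) - 2 * c * m := ⟨_, rfl⟩
  have hsq : Real.sqrt (4 * c ^ 2 * m ^ 2 + 1) ^ 2 = 4 * c ^ 2 * m ^ 2 + 1 :=
    Real.sq_sqrt (by positivity)
  have hs : Real.sqrt (4 * c ^ 2 * m ^ 2 + 1) = δ + 2 * c * m := by linarith
  have hδ0 : 0 < δ := by
    have : 2 * c * m < Real.sqrt (4 * c ^ 2 * m ^ 2 + 1) :=
      Real.lt_sqrt_of_sq_lt (by nlinarith)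
    linarith
  rw [hs] at hsq ⊢
  have hkey : δ * (δ + 4 * c * m) = 1 := by linarith
  have hδ1 : δ ≤ 1 / (4 * c * n) := by
    rw [le_div_iff₀ (by positivity)]
    have : δ * (4 * c * n) ≤ δ * (4 * c * m) := by gcongr
    nlinarith
  have hE : (4 * n - 1 - (δ + 2 * c * m)) / 2
      - (2 * (1 - c) * n + (c - 1 / 2) - 1 / (16 * c * n))
      = δ ^ 2 / (8 * c * m) - 1 / (16 * c * n * m) := by
    have h1 : δ ^ 2 / (8 * c * m) = 1 / (8 * c * m) - δ / 2 := by
      field_simp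
      linarith
    have h2 : 1 / (16 * c * n * m) = 1 / (8 * c * m) - 1 / (16 * c * n) := by
      field_simp
      linarith
    rw [h1, h2, hm]
    ring
  have hA : δ ^ 2 / (8 * c * m) ≤ 1 / (128 * c ^ 3) * (1 / n ^ 2) := by
    calc δ ^ 2 / (8 * c * m) ≤ (1 / (4 * c * n)) ^ 2 / (8 * c * 1) := by
          gcongr
          linarith
      _ = 1 / (128 * c ^ 3) * (1 / n ^ 2) := by
          field_simp
          norm_num
  have hB : 1 / (16 * c * n * m) ≤ 1 / (16 * c) * (1 / n ^ 2) := by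
    calc 1 / (16 * c * n * m) ≤ 1 / (16 * c * n * n) := by gcongr
      _ = 1 / (16 * c) * (1 / n ^ 2) := by
          field_simp
  have hA0 : 0 ≤ δ ^ 2 / (8 * c * m) := by positivity
  have hB0 : 0 ≤ 1 / (16 * c * n * m) := by positivity
  rw [hE, Real.norm_eq_abs, Real.norm_of_nonneg (by positivity), add_mul, abs_le]
  constructor <;> linarith
end

section
/- Let c > 0 be a real number and for n ≥ 2 define μ_n^- = (4n−3 − √(4c²(2n−2)² + 1))/2. Then the sequence μ_n^- − ( 2(1−c)n + (2c − 3/2) − 1/(16cn) ) is O(1/n²) as n → ∞. -/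
/-!
Put `A = 4c(n-1)`, so the square root is `√(A² + 1)`, and let `d = √(A² + 1) - A`. The linear terms
cancel exactly and the error is `1/(16cn) - d/2`. Since `d² + 2Ad = 1`, we have
`0 ≤ 1/(2A) - d = d²/(2A) ≤ 1/(8A³)`, so replacing `d` by `1/(2A)` costs `O(1/n³)`. What remains,
`1/(16cn) - 1/(16c(n-1)) = -1/(16cn(n-1))`, is `O(1/n²)`.
-/

open Asymptotics

/-- Second-order expansion of `√(A² + 1)` with explicit remainder, valid for every `A > 0`. -/
lemma sqrt_sq_add_one_bounds {A : ℝ} (hA : 0 < A) :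
    Real.sqrt (A ^ 2 + 1) ≤ A + 1 / (2 * A) ∧
      A + 1 / (2 * A) - 1 / (8 * A ^ 3) ≤ Real.sqrt (A ^ 2 + 1) := by
  obtain ⟨d, hd⟩ : ∃ d, d = Real.sqrt (A ^ 2 + 1) - A := ⟨_, rfl⟩
  have hs : Real.sqrt (A ^ 2 + 1) = A + d := by linarith
  have hd0 : 0 ≤ d := by
    have : A ≤ Real.sqrt (A ^ 2 + 1) := Real.le_sqrt_of_sq_le (by linarith)
    linarith
  have hq : d ^ 2 + 2 * A * d = 1 := by
    have h := Real.sq_sqrt (show (0 : ℝ) ≤ A ^ 2 + 1 by positivity)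
    rw [hs] at h
    linarith
  have hd1 : d ≤ 1 / (2 * A) := by
    rw [le_div_iff₀ (by positivity)]
    nlinarith [sq_nonneg d]
  have hde : d = 1 / (2 * A) - d ^ 2 / (2 * A) := by
    field_simp
    linarith
  have hd2 : d ^ 2 / (2 * A) ≤ 1 / (8 * A ^ 3) := by
    calc d ^ 2 / (2 * A) ≤ (1 / (2 * A)) ^ 2 / (2 * A) := by gcongr
      _ = 1 / (8 * A ^ 3) := by field_simp; norm_num
  rw [hs]
  constructor <;> linarith

/-- For `c > 0`, with `μₙ⁻ = (4n−3 − √(4c²(2n−2)² + 1))/2`, the sequence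
`μₙ⁻ − (2(1−c)n + (2c − 3/2) − 1/(16cn))` is `O(1/n²)` as `n → ∞`. -/
theorem stmt_12 (c : ℝ) (hc : 0 < c) :
    (fun n : ℕ =>
        (4 * (n : ℝ) - 3 - Real.sqrt (4 * c ^ 2 * (2 * (n : ℝ) - 2) ^ 2 + 1)) / 2
          - (2 * (1 - c) * (n : ℝ) + (2 * c - 3 / 2) - 1 / (16 * c * (n : ℝ))))
      =O[Filter.atTop] fun n : ℕ => 1 / (n : ℝ) ^ 2 := by
  -- For `n ≥ 2` we have `n - 1 ≥ n / 2`, hence `A ≥ 2cn`; this gives the two parts of the constant.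
  apply IsBigO.of_bound (1 / (128 * c ^ 3) + 1 / (8 * c))
  filter_upwards [Filter.eventually_ge_atTop 2] with n hn
  have hx : (2 : ℝ) ≤ n := by exact_mod_cast hn
  generalize (n : ℝ) = x at hx
  have hx1 : 0 < x - 1 := by linarith
  have hx0 : 0 < x := by linarith
  obtain ⟨A, hAdef⟩ : ∃ A, A = 4 * c * (x - 1) := ⟨_, rfl⟩
  have hA : 0 < A := by rw [hAdef]; positivity
  obtain ⟨hu, hl⟩ := sqrt_sq_add_one_bounds hA
  rw [show 4 * c ^ 2 * (2 * x - 2) ^ 2 + 1 = A ^ 2 + 1 by rw [hAdef]; ring]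
  have hA2 : 2 * c * x ≤ A := by rw [hAdef]; nlinarith
  have hrem : 1 / (16 * A ^ 3) ≤ 1 / (128 * c ^ 3) * (1 / x ^ 2) := by
    calc 1 / (16 * A ^ 3) ≤ 1 / (16 * (2 * c * x) ^ 3) := by gcongr
      _ = 1 / (128 * c ^ 3 * x ^ 3) := by ring_nf
      _ ≤ 1 / (128 * c ^ 3 * x ^ 2) := by gcongr <;> linarith
      _ = _ := by field_simp
  have hmain : 1 / (4 * A) - 1 / (16 * c * x) = 1 / (16 * c * (x * (x - 1))) := by
    rw [hAdef]
    field_simp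
    ring
  have hmain_le : 1 / (16 * c * (x * (x - 1))) ≤ 1 / (8 * c) * (1 / x ^ 2) := by
    calc 1 / (16 * c * (x * (x - 1))) ≤ 1 / (16 * c * (x * (x / 2))) := by
          gcongr
          linarith
      _ = _ := by field_simp; norm_num
  have hmain_nonneg : 0 ≤ 1 / (16 * c * (x * (x - 1))) := by positivity
  have hrem_nonneg : 0 ≤ 1 / (16 * A ^ 3) := by positivity
  have e1 : 1 / (2 * A) = 2 * (1 / (4 * A)) := by field_simp; norm_num
  have e2 : 1 / (8 * A ^ 3) = 2 * (1 / (16 * A ^ 3)) := by field_simp; norm_num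
  rw [e1] at hu
  rw [e1, e2] at hl
  rw [Real.norm_eq_abs, Real.norm_of_nonneg (by positivity), add_mul, abs_le]
  constructor <;> linarith
end

section
/- Let c₁, c₂ be real numbers with c₁c₂ ≠ 0 and |c₁² + c₂² − 1| = 2|c₁c₂|, and let λ be a real number with λ ≠ 1/2 and λ ∉ {2k : k ∈ ℕ₊}. Set a₀ = (c₁² + c₂² − 1)/(c₁c₂) (so a₀ = 2 or a₀ = −2), α = −a₀/2, and let δ₊ be the complex number 2·√((2λ−1)/(2c₁c₂)) if a₀ = 2 and 2·√((1−2λ)/(2c₁c₂)) if a₀ = −2 (principal complex square root), and δ₋ = −δ₊. Define P₁(k) = ((2k+2−λ)/(2k−λ)) · (4k²c₂)/((2k+1)(2k+2)c₁) − ((2k+1−λ)(2k+2−λ))/((2k+1)(2k+2)c₁c₂) + ((2k+1)c₁)/((2k+2)c₂) and P₂(k) = ((2k+2−λ)/(2k−λ)) · ((2k−1)·2k)/((2k+1)(2k+2)). Then there exist sequences v⁺, v⁻ : ℕ₊ → ℂ, each satisfying v_{k+2} + P₁(k)v_{k+1} + P₂(k)v_k = 0 for all k ≥ 1, such that v_k^±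 = α^k · k^{−1/4} · exp(δ_± √k) · (1 + r_k^±) where the sequences r^± are O(1/√k) as k → ∞. -/
open Asymptotics
open Filter Topology

/-!
Write `x = xs k = 1/√k`. After the substitution `v_k = α^k u_k` the recurrence becomes
`u_{k+2} + p_k u_{k+1} + q_k u_k = 0` with `p = αP₁ = -2 + a x² + a' x⁴ + O(x⁵)` and
`q = P₂ = 1 - x² + b' x⁴ + O(x⁵)`, where `a = 1 + α(λ - 1/2)/(c₁c₂)` (`jet_P₁`, `jet_P₂`); both
values of `δ` satisfy `δ² = 4(1 - a)`, and `δ ≠ 0` because `λ ≠ 1/2`. It then suffices to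
prove a Birkhoff–Adams theorem for a double characteristic root (`birkhoff_adams`).

*Approximate solution.* The ratio `φ_{k+1}/φ_k` of a solution should satisfy
`τ_{k+1} τ_k + p_k τ_k + q_k = 0`. Matching coefficients, `τ = 1 + A x + B x² + C x³` with
`A = δ/2`, `2B = A² - 1/2` and a suitable `C` solves this up to `O(x⁵)` (`residual_isBigO`).
Since `log τ = A x - x²/4 + O(x³)` and `∑ x_k³` converges with tails `O(x)`, the equation
`φ_{k+1} = τ_k φ_k` has a solution `φ_k = k^{-1/4} e^{δ√k} (1 + O(x))` (`exists_ratio_solution`).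

*Reduction of order.* With `u = φ s`, the increments `D_k = s_{k+1} - s_k` satisfy
`D_{k+1} = m_k D_k - ρ_k s_{k+1}`, where `m_k = q_k / (τ_{k+1} τ_k) = 1 - 2A x + O(x²)` and
`ρ = O(x⁵)`. A solution with `D = O(x³)` has `s = s_∞ + O(x)`, so such an `s` with `s_∞ = 1` is
needed. If `Re A > 0`, then `|m| ≤ 1 - 2x²`, a stronger decay than that of `x³` (whose ratio is
`1 - 3x²/2 + ⋯`), and iterating forwards works (`exists_reduced_of_contracting`). If `Re A ≤ 0`,
a second-order expansion of `|τ|` shows `|m⁻¹| ≤ 1 + 3x²/4`, so solving backwards from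
`s = 1` near `n` gives bounds uniform in `n`, and compactness of a product of discs gives a solution
as `n → ∞` (`exists_reduced_of_expanding`). The oscillatory case `Re A = 0` is included here.

*Small indices.* The solution found near infinity extends down to `k = 1` because `P₂` never
vanishes, `λ` not being an even positive integer (`exists_extension`).
-/

/-! ### The expansion parameter -/

/-- The small parameter `k ↦ 1/√k` in which all expansions are taken. -/
noncomputable def xs (k : ℕ) : ℝ := (√(k : ℝ))⁻¹

lemma xs_nonneg (k : ℕ) : 0 ≤ xs k := by unfold xs; positivity

lemma xs_pos {k : ℕ} (hk : 1 ≤ k) : 0 < xs k := by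
  have : (0 : ℝ) < k := by exact_mod_cast hk
  unfold xs; positivity

lemma xs_sq (k : ℕ) : xs k ^ 2 = (k : ℝ)⁻¹ := by
  unfold xs
  rw [inv_pow, Real.sq_sqrt (Nat.cast_nonneg k)]

lemma xs_succ_sq {k : ℕ} (hk : 1 ≤ k) : xs (k + 1) ^ 2 * (1 + xs k ^ 2) = xs k ^ 2 := by
  have : (0 : ℝ) < k := by exact_mod_cast hk
  rw [xs_sq, xs_sq]
  push_cast
  field_simp

lemma xs_succ_le {k : ℕ} (hk : 1 ≤ k) : xs (k + 1) ≤ xs k := by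
  have h := xs_succ_sq hk
  refine (pow_le_pow_iff_left₀ (xs_nonneg _) (xs_nonneg _) two_ne_zero).1 ?_
  nlinarith [mul_nonneg (sq_nonneg (xs (k + 1))) (sq_nonneg (xs k))]

lemma xs_tendsto : Tendsto xs atTop (𝓝 0) :=
  tendsto_inv_atTop_zero.comp (Real.tendsto_sqrt_atTop.comp tendsto_natCast_atTop_atTop)

lemma xs_eventually {ε : ℝ} (hε : 0 < ε) : ∀ᶠ k : ℕ in atTop, 0 < xs k ∧ xs k < ε := by
  filter_upwards [eventually_ge_atTop 1, xs_tendsto.eventually (gt_mem_nhds hε)] with k h1 h2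
  exact ⟨xs_pos h1, h2⟩

/-- `1/√(k+1) = x - x³/2 + O(x⁵)` with `x = 1/√k`. -/
lemma xs_succ_expand {k : ℕ} (hk : 1 ≤ k) :
    |xs (k + 1) - (xs k - xs k ^ 3 / 2)| ≤ 2 * xs k ^ 5 := by
  have h := xs_succ_sq hk
  have hx := xs_pos hk
  have hx' := xs_nonneg (k + 1)
  have hx1 : xs k ^ 2 ≤ 1 := by
    rw [xs_sq]; exact inv_le_one_of_one_le₀ (by exact_mod_cast hk)
  generalize xs k = x at *
  generalize xs (k + 1) = z at *
  have hd : (z - (x - x ^ 3 / 2)) * (z + (x - x ^ 3 / 2)) * (1 + x ^ 2)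
      = x ^ 6 * (3 / 4 - x ^ 2 / 4) := by
    linear_combination h
  have he : x / 2 ≤ z + (x - x ^ 3 / 2) := by nlinarith
  have h6 : |z - (x - x ^ 3 / 2)| * (z + (x - x ^ 3 / 2)) * (1 + x ^ 2)
      ≤ x ^ 6 := by
    have : |(z - (x - x ^ 3 / 2)) * (z + (x - x ^ 3 / 2)) * (1 + x ^ 2)|
        = |z - (x - x ^ 3 / 2)| * (z + (x - x ^ 3 / 2)) * (1 + x ^ 2) := by
      rw [abs_mul, abs_mul, abs_of_nonneg (by linarith : 0 ≤ z + (x - x ^ 3 / 2)),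
        abs_of_nonneg (by positivity : 0 ≤ 1 + x ^ 2)]
    rw [← this, hd, abs_of_nonneg (mul_nonneg (by positivity) (by linarith))]
    have : 0 ≤ x ^ 6 := by positivity
    nlinarith
  have h7 : |z - (x - x ^ 3 / 2)| * (x / 2) ≤ x ^ 6 := by
    have h0 := abs_nonneg (z - (x - x ^ 3 / 2))
    have h8 : |z - (x - x ^ 3 / 2)| * (x / 2) ≤ |z - (x - x ^ 3 / 2)| * (z + (x - x ^ 3 / 2)) :=
      mul_le_mul_of_nonneg_left he h0
    have h9 : 0 ≤ |z - (x - x ^ 3 / 2)| * (z + (x - x ^ 3 / 2)) * x ^ 2 :=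
      mul_nonneg (mul_nonneg h0 (by linarith)) (sq_nonneg x)
    nlinarith
  have : |z - (x - x ^ 3 / 2)| * (x / 2) ≤ (2 * x ^ 5) * (x / 2) := by
    calc _ ≤ _ := h7
      _ = _ := by ring
  exact le_of_mul_le_mul_right this (by positivity)

/-- The comparison that lets `x³`-sized increments be summed: `∑_{j ≥ k} x_j³ ≤ 8 x_k`. -/
lemma xs_cube_le {k : ℕ} (hk : 1 ≤ k) : xs k ^ 3 ≤ 8 * (xs k - xs (k + 1)) := by
  have h := xs_succ_sq hk
  have hx := xs_pos hk
  have hx' := xs_pos (show 1 ≤ k + 1 by omega)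
  have hle := xs_succ_le hk
  have hx1 : xs k ^ 2 ≤ 1 := by
    rw [xs_sq]; exact inv_le_one_of_one_le₀ (by exact_mod_cast hk)
  generalize xs k = x at *
  generalize xs (k + 1) = z at *
  -- `(x - z)(x + z) = z² x²`, with `z² ≥ x²/2` and `x + z ≤ 2x`.
  have h1 : (x - z) * (x + z) = z ^ 2 * x ^ 2 := by linear_combination (-1) * h
  have h2 : x ^ 2 ≤ 2 * z ^ 2 := by nlinarith [sq_nonneg z]
  have h3 : (x - z) * (x + z) ≤ (x - z) * (2 * x) :=
    mul_le_mul_of_nonneg_left (by linarith) (by linarith)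
  have h4 : x * x ^ 3 ≤ x * (8 * (x - z)) := by nlinarith [sq_nonneg x]
  exact le_of_mul_le_mul_left h4 hx

lemma xs_summable : Summable (fun k : ℕ => xs k ^ 3) := by
  have h : Summable (fun k : ℕ => 1 / (k : ℝ) ^ (3 / 2 : ℝ)) :=
    Real.summable_one_div_nat_rpow.2 (by norm_num)
  refine h.congr fun k => ?_
  unfold xs
  rw [inv_pow, one_div, Real.sqrt_eq_rpow, ← Real.rpow_natCast, ← Real.rpow_mul (Nat.cast_nonneg k)]
  norm_num

/-- A sequence of size `O(x³)` is the difference of one of size `O(x)`. -/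
lemma exists_primitive (f : ℕ → ℂ) (hf : f =O[atTop] fun k => xs k ^ 3) :
    ∃ L : ℕ → ℂ, (∀ k, L (k + 1) - L k = f k) ∧ L =O[atTop] xs := by
  have hs : Summable f := summable_of_isBigO_nat xs_summable hf
  obtain ⟨C, hC0, hC⟩ := hf.exists_nonneg
  rw [IsBigOWith, eventually_atTop] at hC
  obtain ⟨N, hN⟩ := hC
  set S : ℕ → ℂ := fun k => ∑ i ∈ Finset.range k, f i with hS
  have hlim : Tendsto S atTop (𝓝 (∑' i, f i)) := hs.hasSum.tendsto_sum_nat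
  refine ⟨fun k => S k - ∑' i, f i, fun k => ?_, ?_⟩
  · simp [hS, Finset.sum_range_succ]
  refine IsBigO.of_bound (8 * C) ?_
  filter_upwards [eventually_ge_atTop (max N 1)] with k hk
  have hbd : ∀ l, k ≤ l → ‖S l - S k‖ ≤ 8 * C * (xs k - xs l) := by
    intro l hl
    induction l, hl using Nat.le_induction with
    | base => simp
    | succ l hl ih =>
      have h1 : S (l + 1) - S k = (S l - S k) + f l := by
        simp [hS, Finset.sum_range_succ]; ring
      have h2 := hN l (by omega)
      rw [Real.norm_of_nonneg (pow_nonneg (xs_nonneg l) 3)] at h2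
      have h3 := xs_cube_le (k := l) (by omega)
      have h4 := mul_le_mul_of_nonneg_left h3 hC0
      rw [h1]
      refine (norm_add_le _ _).trans ?_
      linarith
  have h5 : ‖(∑' i, f i) - S k‖ ≤ 8 * C * xs k := by
    refine le_of_tendsto (hlim.sub_const (S k)).norm ?_
    filter_upwards [eventually_ge_atTop k] with l hl
    refine (hbd l hl).trans ?_
    have := mul_nonneg hC0 (xs_nonneg l)
    linarith
  rw [norm_sub_rev] at h5
  rwa [Real.norm_of_nonneg (xs_nonneg k)]

/-! ### The reduced recurrence: forward iteration -/

/-- The reduced recurrence `D_{k+1} = m_k D_k - ρ_k s_{k+1}` for the increments `D_k = s_{k+1} - s_k`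
of the correction factor `s`. -/
def Reduced (m ρ s : ℕ → ℂ) (k : ℕ) : Prop :=
  s (k + 2) - s (k + 1) = m k * (s (k + 1) - s k) - ρ k * s (k + 1)

lemma exists_reduced_from (m ρ : ℕ → ℂ) (N : ℕ) :
    ∃ s : ℕ → ℂ, s N = 1 ∧ s (N + 1) = 1 ∧ ∀ k ≥ N, Reduced m ρ s k := by
  let t : ℕ → ℂ × ℂ := fun n => Nat.rec (1, 1)
    (fun i p => (p.2, p.2 + (m (N + i) * (p.2 - p.1) - ρ (N + i) * p.2))) n
  have ht : ∀ i, t (i + 1) = ((t i).2, (t i).2 + (m (N + i) * ((t i).2 - (t i).1)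
      - ρ (N + i) * (t i).2)) := fun i => rfl
  refine ⟨fun k => (t (k - N)).1, by simp [t], by simp [t], fun k hk => ?_⟩
  obtain ⟨i, rfl⟩ := Nat.exists_eq_add_of_le hk
  unfold Reduced
  have e0 : N + i - N = i := by omega
  have e1 : N + i + 1 - N = i + 1 := by omega
  have e2 : N + i + 2 - N = i + 1 + 1 := by omega
  simp only [e0, e1, e2, ht]
  ring

/-- Dominant case: when `m` contracts faster than `x³` decays, iterating the reduced recurrence
forwards keeps `D_k = O(x³)`, and a normalisation makes the limit of `s` equal to `1`. -/
lemma exists_reduced_of_contracting (m ρ : ℕ → ℂ)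
    (hm : ∀ᶠ k in atTop, ‖m k‖ ≤ 1 - 2 * xs k ^ 2)
    (hρ : ρ =O[atTop] fun k => xs k ^ 5) :
    ∃ s : ℕ → ℂ, (∀ᶠ k in atTop, Reduced m ρ s k) ∧ (fun k => s k - 1) =O[atTop] xs := by
  obtain ⟨C, hC0, hC⟩ := hρ.exists_pos
  rw [IsBigOWith] at hC
  have hsmall := xs_eventually (ε := 1 / (64 * C + 1)) (by positivity)
  obtain ⟨N, hN⟩ := eventually_atTop.1 ((hm.and (hC.and hsmall)).and (eventually_ge_atTop 1))
  obtain ⟨s, hs0, hs1, hs⟩ := exists_reduced_from m ρ N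
  have hxN : 8 * (4 * C) * xs N ≤ 1 / 2 := by
    have h := (hN N le_rfl).1.2.2.2
    rw [lt_div_iff₀ (by positivity)] at h
    have := xs_nonneg N
    nlinarith
  have key : ∀ k ≥ N, ‖s (k + 1) - s k‖ ≤ 4 * C * xs k ^ 3 ∧
      ‖s k - 1‖ ≤ 8 * (4 * C) * (xs N - xs k) := by
    intro k hk
    induction k, hk using Nat.le_induction with
    | base =>
      have := xs_nonneg N
      rw [hs0, hs1]; simp; positivity
    | succ k hk ih =>
      obtain ⟨ih1, ih2⟩ := ih
      obtain ⟨⟨h1, h2, hx, -⟩, hk1⟩ := hN k hk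
      have hr : ‖s (k + 1) - 1‖ ≤ 8 * (4 * C) * (xs N - xs (k + 1)) := by
        have h3 := xs_cube_le hk1
        have h4 : s (k + 1) - 1 = (s k - 1) + (s (k + 1) - s k) := by ring
        rw [h4]
        refine (norm_add_le _ _).trans ?_
        nlinarith
      refine ⟨?_, hr⟩
      have hs2 : ‖s (k + 1)‖ ≤ 2 := by
        have h5 : s (k + 1) = 1 + (s (k + 1) - 1) := by ring
        rw [h5]
        refine (norm_add_le _ _).trans ?_
        have := mul_nonneg hC0.le (xs_nonneg (k + 1))
        rw [norm_one]
        nlinarith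
      rw [hs k hk]
      rw [Real.norm_of_nonneg (pow_nonneg (xs_nonneg k) 5)] at h2
      have hx' := xs_nonneg (k + 1)
      have hsq := xs_succ_sq hk1
      have h6 : xs k ^ 3 * (1 - 3 / 2 * xs k ^ 2) ≤ xs (k + 1) ^ 3 := by
        have he := xs_succ_le hk1
        -- with `x = xs k`, `z = xs (k + 1)`: `z² = x² / (1 + x²)` and `z ≥ x (1 - x²/2)`
        have h7 : xs k * (1 - xs k ^ 2 / 2) ≤ xs (k + 1) := by
          by_contra! hcon
          have h8 : xs (k + 1) ^ 2 < (xs k * (1 - xs k ^ 2 / 2)) ^ 2 :=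
            pow_lt_pow_left₀ hcon hx' two_ne_zero
          have h9 : 0 < xs k * (1 - xs k ^ 2 / 2) := lt_of_le_of_lt hx' hcon
          have h10 : 0 < 1 - xs k ^ 2 / 2 := (pos_iff_pos_of_mul_pos h9).1 hx
          have h11 : xs (k + 1) ^ 2 * (1 + xs k ^ 2)
              < (xs k * (1 - xs k ^ 2 / 2)) ^ 2 * (1 + xs k ^ 2) :=
            mul_lt_mul_of_pos_right h8 (by positivity)
          rw [hsq] at h11
          have h12 : (xs k * (1 - xs k ^ 2 / 2)) ^ 2 * (1 + xs k ^ 2)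
            = xs k ^ 2 - xs k ^ 6 * (3 / 4 - xs k ^ 2 / 4) := by ring
          have h13 : 0 ≤ xs k ^ 6 * (3 / 4 - xs k ^ 2 / 4) :=
            mul_nonneg (by positivity) (by linarith)
          linarith
        have h8 : xs k ^ 2 * (1 - xs k ^ 2) ≤ xs (k + 1) ^ 2 := by
          have h9 : 0 ≤ (xs k ^ 2 - xs (k + 1) ^ 2) * xs k ^ 2 :=
            mul_nonneg (by nlinarith) (sq_nonneg _)
          nlinarith
        by_cases hb : xs k ^ 2 ≤ 1
        · calc xs k ^ 3 * (1 - 3 / 2 * xs k ^ 2)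
              ≤ (xs k ^ 2 * (1 - xs k ^ 2)) * (xs k * (1 - xs k ^ 2 / 2)) := by
                have : 0 ≤ xs k ^ 7 / 2 := by positivity
                nlinarith
            _ ≤ xs (k + 1) ^ 2 * xs (k + 1) := by
                apply mul_le_mul h8 h7 _ (sq_nonneg _)
                exact mul_nonneg hx.le (by linarith)
            _ = _ := by ring
        · push Not at hb
          have h14 : xs k ^ 3 * (1 - 3 / 2 * xs k ^ 2) ≤ 0 :=
            mul_nonpos_of_nonneg_of_nonpos (by positivity) (by linarith)
          exact h14.trans (by positivity)
      calc ‖m k * (s (k + 1) - s k) - ρ k * s (k + 1)‖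
          ≤ ‖m k‖ * ‖s (k + 1) - s k‖ + ‖ρ k‖ * ‖s (k + 1)‖ := by
            rw [← norm_mul, ← norm_mul]; exact norm_sub_le _ _
        _ ≤ (1 - 2 * xs k ^ 2) * (4 * C * xs k ^ 3) + (C * xs k ^ 5) * 2 := by
            gcongr
            exact (norm_nonneg _).trans h1
        _ = 4 * C * (xs k ^ 3 * (1 - 3 / 2 * xs k ^ 2)) := by ring
        _ ≤ 4 * C * xs (k + 1) ^ 3 := by gcongr
  obtain ⟨E, hE, hEO⟩ := exists_primitive (fun k => s (k + 1) - s k) (by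
    refine IsBigO.of_bound (4 * C) ?_
    filter_upwards [eventually_ge_atTop N] with k hk
    rw [Real.norm_of_nonneg (pow_nonneg (xs_nonneg k) 3)]
    exact (key k hk).1)
  -- `s - E` is constant, hence equal to the limit of `s`.
  have hconst : ∀ k, s k - E k = s 0 - E 0 := by
    intro k
    induction k with
    | zero => rfl
    | succ k ih => rw [← ih]; linear_combination -hE k
  set a := s 0 - E 0 with ha
  have hE0 : Tendsto E atTop (𝓝 0) := hEO.trans_tendsto xs_tendsto
  have ha1 : ‖a - 1‖ ≤ 1 / 2 := by
    have h1 : Tendsto (fun k => s k - 1) atTop (𝓝 (a - 1)) := by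
      have : (fun k => s k - 1) = fun k => (a - 1) + E k := by
        funext k; linear_combination hconst k
      rw [this]; simpa using hE0.const_add (a - 1)
    refine le_of_tendsto h1.norm ?_
    filter_upwards [eventually_ge_atTop N] with k hk
    have h2 := (key k hk).2
    have := mul_nonneg hC0.le (xs_nonneg k)
    linarith
  have ha0 : a ≠ 0 := by
    intro h; rw [h] at ha1; norm_num at ha1
  refine ⟨fun k => s k / a, ?_, ?_⟩
  · filter_upwards [eventually_ge_atTop N] with k hk
    have h := hs k hk
    unfold Reduced at h ⊢
    field_simp
    linear_combination h
  · have : (fun k => s k / a - 1) = fun k => a⁻¹ * E k := by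
      funext k
      field_simp
      linear_combination hconst k
    rw [this]
    exact hEO.const_mul_left _

/-! ### The reduced recurrence: backward iteration and compactness -/

/-- Recessive or oscillatory case: `m⁻¹` may exceed `1` by less than the factor by which `x³` grows
from `k + 1` to `k`. Solving backwards from `s = 1` on `[n, ∞)` gives bounds uniform in `n`,
and Tychonoff's theorem provides a solution on a whole half-line with the same bounds. -/
lemma exists_reduced_of_expanding (m ρ : ℕ → ℂ)
    (hm0 : ∀ᶠ k in atTop, m k ≠ 0)
    (hm : ∀ᶠ k in atTop, ‖(m k)⁻¹‖ ≤ 1 + 3 / 4 * xs k ^ 2)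
    (hρ : ρ =O[atTop] fun k => xs k ^ 5) :
    ∃ s : ℕ → ℂ, (∀ᶠ k in atTop, Reduced m ρ s k) ∧ (fun k => s k - 1) =O[atTop] xs := by
  obtain ⟨C, hC0, hC⟩ := hρ.exists_pos
  rw [IsBigOWith] at hC
  have hsmall := xs_eventually (ε := 1 / (128 * C + 1)) (by positivity)
  obtain ⟨N, hN⟩ := eventually_atTop.1
    ((((hm0.and hm).and hC).and hsmall).and (eventually_ge_atTop 1))
  have back : ∀ n, N ≤ n → ∃ s : ℕ → ℂ, (∀ k, N ≤ k → k < n → Reduced m ρ s k) ∧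
      (∀ k, ‖s k - 1‖ ≤ 8 * (16 * C) * xs k) ∧ ‖s (N + 1) - s N‖ ≤ 16 * C * xs N ^ 3 := by
    intro n hn
    refine Nat.decreasingInduction'
      (P := fun j => ∃ s : ℕ → ℂ, (∀ k, j ≤ k → k < n → Reduced m ρ s k) ∧
      (∀ k, ‖s k - 1‖ ≤ 8 * (16 * C) * xs k) ∧ ‖s (j + 1) - s j‖ ≤ 16 * C * xs j ^ 3) ?_ hn ?_
    · rintro j hjn hNj ⟨s, hs, hb, hD⟩
      obtain ⟨⟨⟨⟨hmj0, hmj⟩, hρj⟩, hx, hxs⟩, hj1⟩ := hN j hNj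
      rw [Real.norm_of_nonneg (pow_nonneg (xs_nonneg j) 5)] at hρj
      set d : ℂ := (m j)⁻¹ * ((s (j + 2) - s (j + 1)) + ρ j * s (j + 1)) with hd
      have hsq := xs_succ_sq hj1
      have hle := xs_succ_le hj1
      have hx' := xs_nonneg (j + 1)
      have hx1 : xs j ^ 2 ≤ 1 := by
        rw [xs_sq]; exact inv_le_one_of_one_le₀ (by exact_mod_cast hj1)
      have hs2 : ‖s (j + 1)‖ ≤ 2 := by
        have h5 : s (j + 1) = 1 + (s (j + 1) - 1) := by ring
        rw [h5]
        refine (norm_add_le _ _).trans ?_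
        have h6 := hb (j + 1)
        rw [lt_div_iff₀ (by positivity)] at hxs
        have h7 : 8 * (16 * C) * xs (j + 1) ≤ 8 * (16 * C) * xs j := by gcongr
        rw [norm_one]
        nlinarith
      have hcube : (1 + 3 / 4 * xs j ^ 2) * xs (j + 1) ^ 3
          ≤ xs j ^ 3 * (1 - 1 / 4 * xs j ^ 2) := by
        -- both sides squared and multiplied by `(1 + x²)³` are polynomials in `x²`
        refine (pow_le_pow_iff_left₀ (by positivity)
          (mul_nonneg (by positivity) (by linarith)) two_ne_zero).1 ?_
        refine le_of_mul_le_mul_right ?_ (by positivity : 0 < (1 + xs j ^ 2) ^ 3)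
        have e1 : ((1 + 3 / 4 * xs j ^ 2) * xs (j + 1) ^ 3) ^ 2 * (1 + xs j ^ 2) ^ 3
            = (1 + 3 / 4 * xs j ^ 2) ^ 2 * (xs (j + 1) ^ 2 * (1 + xs j ^ 2)) ^ 3 := by ring
        rw [e1, hsq]
        have e2 : (xs j ^ 3 * (1 - 1 / 4 * xs j ^ 2)) ^ 2 * (1 + xs j ^ 2) ^ 3
            = ((1 - 1 / 4 * xs j ^ 2) ^ 2 * (1 + xs j ^ 2) ^ 3) * (xs j ^ 2) ^ 3 := by ring
        rw [e2]
        refine mul_le_mul_of_nonneg_right ?_ (by positivity)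
        have hy0 := sq_nonneg (xs j)
        generalize xs j ^ 2 = y at *
        nlinarith [mul_nonneg hy0 (sub_nonneg.2 hx1), pow_nonneg hy0 3, pow_nonneg hy0 4,
          mul_nonneg (mul_nonneg hy0 hy0) (sub_nonneg.2 hx1),
          mul_nonneg (pow_nonneg hy0 3) (sub_nonneg.2 hx1), pow_nonneg hy0 5]
      have hdn : ‖d‖ ≤ 16 * C * xs j ^ 3 := by
        calc ‖d‖ = ‖(m j)⁻¹‖ * ‖(s (j + 2) - s (j + 1)) + ρ j * s (j + 1)‖ := norm_mul _ _
          _ ≤ (1 + 3 / 4 * xs j ^ 2) * (16 * C * xs (j + 1) ^ 3 + C * xs j ^ 5 * 2) := by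
              gcongr
              refine (norm_add_le _ _).trans ?_
              rw [norm_mul]
              gcongr
          _ = 16 * C * ((1 + 3 / 4 * xs j ^ 2) * xs (j + 1) ^ 3)
                + 2 * C * xs j ^ 5 * (1 + 3 / 4 * xs j ^ 2) := by ring
          _ ≤ 16 * C * (xs j ^ 3 * (1 - 1 / 4 * xs j ^ 2)) + 2 * C * xs j ^ 5 * 2 := by
              gcongr
              linarith
          _ = 16 * C * xs j ^ 3 := by ring
      refine ⟨Function.update s j (s (j + 1) - d), ?_, ?_, ?_⟩
      · intro k hjk hkn
        rcases hjk.eq_or_lt with rfl | hlt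
        · unfold Reduced
          rw [Function.update_self, Function.update_of_ne (by omega),
            Function.update_of_ne (by omega), hd]
          field_simp
          ring
        · have := hs k hlt hkn
          unfold Reduced at this ⊢
          rwa [Function.update_of_ne (by omega), Function.update_of_ne (by omega),
            Function.update_of_ne (by omega)]
      · intro k
        by_cases hkj : k = j
        · subst hkj
          rw [Function.update_self]
          have h3 := xs_cube_le hj1
          have h4 : s (k + 1) - d - 1 = (s (k + 1) - 1) - d := by ring
          rw [h4]
          refine (norm_sub_le _ _).trans ?_
          have h5 := hb (k + 1)
          nlinarith
        · rw [Function.update_of_ne hkj]; exact hb k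
      · rw [Function.update_self, Function.update_of_ne (by omega)]
        simpa using hdn
    · refine ⟨fun _ => 1, fun k h1 h2 => by omega, fun k => ?_, ?_⟩
      · have := xs_nonneg k
        simp; positivity
      · have := xs_nonneg n
        simp; positivity
  let T : ℕ → Set (ℕ → ℂ) := fun n =>
    (Set.univ.pi fun k => Metric.closedBall (1 : ℂ) (8 * (16 * C) * xs k)) ∩
      {s | ∀ k, N ≤ k → k < N + n → Reduced m ρ s k}
  have hball : IsCompact (Set.univ.pi fun k : ℕ =>
      Metric.closedBall (1 : ℂ) (8 * (16 * C) * xs k)) :=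
    isCompact_univ_pi fun k => isCompact_closedBall _ _
  have hclosed : ∀ n, IsClosed {s : ℕ → ℂ | ∀ k, N ≤ k → k < N + n → Reduced m ρ s k} := by
    intro n
    simp only [Set.ofPred_forall]
    refine isClosed_iInter fun k => isClosed_iInter fun _ => isClosed_iInter fun _ => ?_
    unfold Reduced
    exact isClosed_eq (by fun_prop) (by fun_prop)
  obtain ⟨s, hs⟩ := IsCompact.nonempty_iInter_of_sequence_nonempty_isCompact_isClosed T
    (fun n s hs => ⟨hs.1, fun k h1 h2 => hs.2 k h1 (by omega)⟩)
    (fun n => by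
      obtain ⟨s, h1, h2, -⟩ := back (N + n) (by omega)
      exact ⟨s, fun k _ => by simpa [dist_eq_norm] using h2 k, h1⟩)
    (hball.inter_right (hclosed 0))
    (fun n => hball.isClosed.inter (hclosed n))
  rw [Set.mem_iInter] at hs
  refine ⟨s, ?_, ?_⟩
  · filter_upwards [eventually_ge_atTop N] with k hk
    exact (hs (k + 1)).2 k hk (by omega)
  · refine IsBigO.of_bound (8 * (16 * C)) (Eventually.of_forall fun k => ?_)
    rw [Real.norm_of_nonneg (xs_nonneg k)]
    simpa [dist_eq_norm] using (hs 0).1 k (Set.mem_univ k)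

/-! ### The approximate ratio -/

lemma xs_ofReal_tendsto : Tendsto (fun k => (xs k : ℂ)) atTop (𝓝 0) := by
  have := (Complex.continuous_ofReal.tendsto 0).comp xs_tendsto
  simpa [Function.comp_def] using this

lemma xs_bounded_comp {f : ℂ → ℂ → ℂ} (hf : Continuous (Function.uncurry f)) :
    (fun k => f (xs k) (xs (k + 1))) =O[atTop] fun _ => (1 : ℝ) := by
  have h1 := xs_ofReal_tendsto
  have h2 : Tendsto (fun k => (xs (k + 1) : ℂ)) atTop (𝓝 0) := h1.comp (tendsto_add_atTop_nat 1)
  exact ((hf.tendsto (0, 0)).comp (h1.prodMk_nhds h2)).isBigO_one ℝ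

lemma isBigO_mul_bounded {e g : ℕ → ℂ} {n : ℕ} (he : e =O[atTop] fun k => xs k ^ n)
    (hg : g =O[atTop] fun _ => (1 : ℝ)) : (fun k => e k * g k) =O[atTop] fun k => xs k ^ n := by
  simpa using he.mul hg

lemma isBigO_pow_mul (n : ℕ) {f : ℂ → ℂ → ℂ} (hf : Continuous (Function.uncurry f)) :
    (fun k => (xs k : ℂ) ^ n * f (xs k) (xs (k + 1))) =O[atTop] fun k => xs k ^ n := by
  refine isBigO_mul_bounded (IsBigO.of_norm_right ?_) (xs_bounded_comp hf)
  refine IsBigO.of_bound 1 (Eventually.of_forall fun k => ?_)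
  simp

lemma xs_pow_isBigO {i j : ℕ} (h : i ≤ j) :
    (fun k => xs k ^ j) =O[atTop] fun k => xs k ^ i := by
  refine IsBigO.of_bound 1 ?_
  filter_upwards [xs_eventually one_pos] with k hk
  rw [one_mul, Real.norm_of_nonneg (pow_nonneg hk.1.le _),
    Real.norm_of_nonneg (pow_nonneg hk.1.le _)]
  exact pow_le_pow_of_le_one hk.1.le hk.2.le h

/-- The truncated formal series `1 + Ax + Bx² + Cx³`, at `x = 1/√k`, for the ratio `φ_{k+1}/φ_k` of
an approximate solution `φ`. -/
noncomputable def tau (A B C : ℂ) (k : ℕ) : ℂ :=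
  1 + A * xs k + B * (xs k : ℂ) ^ 2 + C * (xs k : ℂ) ^ 3

lemma tau_tendsto (A B C : ℂ) : Tendsto (tau A B C) atTop (𝓝 1) := by
  have h1 := xs_ofReal_tendsto
  have h : Continuous (fun z : ℂ => 1 + A * z + B * z ^ 2 + C * z ^ 3) := by fun_prop
  have := (h.tendsto 0).comp h1
  simp only [mul_zero, ne_eq, OfNat.ofNat_ne_zero, not_false_eq_true, zero_pow, add_zero] at this
  exact this

lemma tau_bounded (A B C : ℂ) : tau A B C =O[atTop] fun _ => (1 : ℝ) :=
  (tau_tendsto A B C).isBigO_one ℝ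

lemma tau_mul_tendsto (A B C : ℂ) :
    Tendsto (fun k => tau A B C (k + 1) * tau A B C k) atTop (𝓝 1) := by
  simpa using ((tau_tendsto A B C).comp (tendsto_add_atTop_nat 1)).mul (tau_tendsto A B C)

lemma tau_mul_inv_bounded (A B C : ℂ) :
    (fun k => (tau A B C (k + 1) * tau A B C k)⁻¹) =O[atTop] fun _ => (1 : ℝ) :=
  ((tau_mul_tendsto A B C).inv₀ one_ne_zero).isBigO_one ℝ

lemma tau_succ_expand (A B C : ℂ) :
    (fun k => tau A B C (k + 1) - (1 + A * (xs k - (xs k : ℂ) ^ 3 / 2)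
      + B * ((xs k : ℂ) ^ 2 - (xs k : ℂ) ^ 4) + C * (xs k : ℂ) ^ 3))
      =O[atTop] fun k => xs k ^ 5 := by
  have he : (fun k => ((xs (k + 1) : ℂ) - (xs k - (xs k : ℂ) ^ 3 / 2)))
      =O[atTop] fun k => xs k ^ 5 := by
    refine IsBigO.of_bound 2 ?_
    filter_upwards [eventually_ge_atTop 1] with k hk
    have := xs_succ_expand hk
    rw [Real.norm_of_nonneg (pow_nonneg (xs_nonneg k) 5)]
    have h2 : ((xs (k + 1) : ℂ) - (xs k - (xs k : ℂ) ^ 3 / 2))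
        = ((xs (k + 1) - (xs k - xs k ^ 3 / 2) : ℝ) : ℂ) := by push_cast; ring
    rw [h2, Complex.norm_real]
    exact this
  have hb := xs_bounded_comp (f := fun x z => A + B * (z + (x - x ^ 3 / 2))
    + C * (z ^ 2 + z * (x - x ^ 3 / 2) + (x - x ^ 3 / 2) ^ 2))
    (by unfold Function.uncurry; fun_prop)
  have hp := isBigO_pow_mul 5 (f := fun x z => B * x / 4
    + C * (-3 / 2 + 3 / 4 * x ^ 2 - x ^ 4 / 8)) (by unfold Function.uncurry; fun_prop)
  refine ((isBigO_mul_bounded he hb).add hp).congr_left fun k => ?_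
  unfold tau
  ring

/-- The coefficients are chosen so that the ratio equation `τ_{k+1} τ_k + p_k τ_k + q_k = 0` holds
up to `O(x⁵)`: the terms of order `x²`, `x³`, `x⁴` vanish by `hA`, `hB`, `hC`. -/
lemma residual_isBigO {p q : ℕ → ℂ} {a a' b' A B C : ℂ}
    (hp : (fun k => p k - (-2 + a * (xs k : ℂ) ^ 2 + a' * (xs k : ℂ) ^ 4))
      =O[atTop] fun k => xs k ^ 5)
    (hq : (fun k => q k - (1 - (xs k : ℂ) ^ 2 + b' * (xs k : ℂ) ^ 4))
      =O[atTop] fun k => xs k ^ 5)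
    (hA : A ^ 2 = 1 - a) (hB : 2 * B = 1 / 2 - a)
    (hC : 2 * A * C + a' - B - A ^ 2 / 2 + B ^ 2 + B * a + b' = 0) :
    (fun k => tau A B C (k + 1) * tau A B C k + p k * tau A B C k + q k)
      =O[atTop] fun k => xs k ^ 5 := by
  have h1 := isBigO_mul_bounded (tau_succ_expand A B C) (tau_bounded A B C)
  have h2 := isBigO_mul_bounded hp (tau_bounded A B C)
  have h3 := isBigO_pow_mul 5 (f := fun x _ =>
    (A * (a' - B) + B * (C - A / 2) + C * (B + a)) + (B * (a' - B) + C * (C - A / 2)) * x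
      + C * (a' - B) * x ^ 2) (by unfold Function.uncurry; fun_prop)
  refine (((h1.add h2).add hq).add h3).congr_left fun k => ?_
  unfold tau
  linear_combination (-(xs k : ℂ) ^ 2) * hA - (xs k : ℂ) ^ 3 * A * hB - (xs k : ℂ) ^ 4 * hC

lemma norm_le_of_eventually_small {f : ℕ → ℂ} {n : ℕ} (hf : f =O[atTop] fun k => xs k ^ (n + 1))
    {ε : ℝ} (hε : 0 < ε) : ∀ᶠ k in atTop, ‖f k‖ ≤ ε * xs k ^ n := by
  obtain ⟨M, hM0, hM⟩ := hf.exists_pos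
  rw [IsBigOWith] at hM
  filter_upwards [hM, xs_eventually (ε := ε / M) (by positivity)] with k h1 h2
  rw [lt_div_iff₀ hM0] at h2
  rw [Real.norm_of_nonneg (pow_nonneg h2.1.le _)] at h1
  have : 0 ≤ xs k ^ n := pow_nonneg h2.1.le n
  calc ‖f k‖ ≤ (xs k * M) * xs k ^ n := by rw [pow_succ] at h1; linarith
    _ ≤ ε * xs k ^ n := by gcongr; exact h2.2.le

/-- If `Re A > 0`, the multiplier `q_k / (τ_{k+1} τ_k) = 1 - 2Ax + O(x²)` is contracting. -/
lemma norm_multiplier_le {q : ℕ → ℂ} {b' A B C : ℂ}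
    (hq : (fun k => q k - (1 - (xs k : ℂ) ^ 2 + b' * (xs k : ℂ) ^ 4))
      =O[atTop] fun k => xs k ^ 5) (hA : 0 < A.re) :
    ∀ᶠ k in atTop, ‖q k * (tau A B C (k + 1) * tau A B C k)⁻¹‖ ≤ 1 - 2 * xs k ^ 2 := by
  have h1 : (fun k => q k - (1 - 2 * A * xs k) * (tau A B C (k + 1) * tau A B C k))
      =O[atTop] fun k => xs k ^ 2 := by
    have e1 := isBigO_mul_bounded ((tau_succ_expand A B C).trans (xs_pow_isBigO (by norm_num :
      2 ≤ 5))) (g := fun k => tau A B C k * -(1 - 2 * A * xs k))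
      (by simpa using (tau_bounded A B C).mul (xs_bounded_comp (f := fun x _ => -(1 - 2 * A * x))
        (by unfold Function.uncurry; fun_prop)))
    have e2 := hq.trans (xs_pow_isBigO (by norm_num : 2 ≤ 5))
    have e3 := isBigO_pow_mul 2 (f := fun x _ => -1 + b' * x ^ 2 +
      (4 * A ^ 2 - (1 - 2 * A * x) * (1 + A * x) *
          ((-A * x / 2 + B * (1 - x ^ 2) + C * x) + (B + C * x))
        - (1 - 2 * A * x) * x ^ 2 * (-A * x / 2 + B * (1 - x ^ 2) + C * x) * (B + C * x)
        - A ^ 2 * (1 - 2 * A * x))) (by unfold Function.uncurry; fun_prop)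
    refine ((e1.add e2).add e3).congr_left fun k => ?_
    unfold tau
    ring
  have h2 := isBigO_mul_bounded h1 (tau_mul_inv_bounded A B C)
  have h3 := norm_le_of_eventually_small (n := 1) h2 (ε := A.re / 4) (by linarith)
  have h4 : ∀ᶠ k in atTop, tau A B C (k + 1) * tau A B C k ≠ 0 :=
    (tau_mul_tendsto A B C).eventually_ne one_ne_zero
  have hn : 0 < ‖A‖ ^ 2 + 1 := by positivity
  filter_upwards [h3, h4, xs_eventually (ε := A.re / (2 * (‖A‖ ^ 2 + 1))) (by positivity),
    xs_eventually (ε := 1 / A.re) (by positivity), xs_eventually (ε := A.re / 4) (by positivity)]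
    with k h5 h6 ⟨hx, hxs⟩ ⟨_, hx1⟩ ⟨_, hx2⟩
  rw [lt_div_iff₀ (by positivity)] at hxs
  rw [lt_div_iff₀ hA] at hx1
  have h7 : q k * (tau A B C (k + 1) * tau A B C k)⁻¹ = (1 - 2 * A * xs k)
      + (q k - (1 - 2 * A * xs k) * (tau A B C (k + 1) * tau A B C k))
        * (tau A B C (k + 1) * tau A B C k)⁻¹ := by
    rw [sub_mul, mul_assoc _ (tau A B C (k + 1) * tau A B C k), mul_inv_cancel₀ h6]
    ring
  have h8 : ‖1 - 2 * A * xs k‖ ≤ 1 - A.re * xs k := by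
    refine (pow_le_pow_iff_left₀ (norm_nonneg _) (by linarith) two_ne_zero).1 ?_
    have hAn : ‖A‖ ^ 2 = A.re ^ 2 + A.im ^ 2 := by
      rw [Complex.sq_norm, Complex.normSq_apply]; ring
    rw [Complex.sq_norm, Complex.normSq_apply]
    simp
    have : xs k * (xs k * (2 * (‖A‖ ^ 2 + 1))) ≤ xs k * A.re :=
      mul_le_mul_of_nonneg_left hxs.le hx.le
    nlinarith [mul_pos hx hA, sq_nonneg (A.re * xs k), sq_nonneg (xs k)]
  rw [h7]
  refine (norm_add_le _ _).trans ?_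
  nlinarith

/-- If `Re A ≤ 0`, then `|τ|² = 1 + 2 Re(A) x + (2 Re(A)² - 1/2) x² + O(x³)`; the first-order
term has the favourable sign, and the second-order one comes from `2B = A² - 1/2`. -/
lemma norm_tau_le {A B C : ℂ} (hA : A.re ≤ 0) (hB : 2 * B = A ^ 2 - 1 / 2) :
    ∀ᶠ k in atTop, ‖tau A B C k‖ ≤ 1 - xs k ^ 2 / 5 := by
  have hBr : B.re = (A.re ^ 2 - A.im ^ 2) / 2 - 1 / 4 := by
    have := congrArg Complex.re hB
    simp [pow_two] at this
    linarith
  have hBi : B.im = A.re * A.im := by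
    have := congrArg Complex.im hB
    simp [pow_two] at this
    linarith
  set E1 := 2 * (A.re * B.re + A.im * B.im) with hE1
  set E2 := B.re ^ 2 + B.im ^ 2 with hE2
  filter_upwards [xs_eventually (ε := 1) one_pos,
    xs_eventually (ε := 1 / (-A.re + 1)) (by exact one_div_pos.2 (by linarith)),
    xs_eventually (ε := 1 / (50 * (|E1| + |E2| + 1))) (by positivity),
    xs_eventually (ε := 1 / (25 * (‖C‖ + 1))) (by positivity)]
    with k ⟨hx, hx1⟩ ⟨_, h1⟩ ⟨_, h2⟩ ⟨_, h3⟩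
  rw [lt_div_iff₀ (by linarith)] at h1
  rw [lt_div_iff₀ (by positivity)] at h2 h3
  have h4 : ‖1 + A * xs k + B * (xs k : ℂ) ^ 2‖ ≤ 1 - 6 / 25 * xs k ^ 2 := by
    refine (pow_le_pow_iff_left₀ (norm_nonneg _) (by nlinarith) two_ne_zero).1 ?_
    rw [Complex.sq_norm, Complex.normSq_apply]
    have e : ((1 + A * xs k + B * (xs k : ℂ) ^ 2).re * (1 + A * xs k + B * (xs k : ℂ) ^ 2).re
        + (1 + A * xs k + B * (xs k : ℂ) ^ 2).im * (1 + A * xs k + B * (xs k : ℂ) ^ 2).im)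
        = 1 + 2 * A.re * xs k * (1 + A.re * xs k) - xs k ^ 2 / 2
          + (E1 + E2 * xs k) * xs k * xs k ^ 2 := by
      have e0 : (xs k : ℂ) ^ 2 = ((xs k ^ 2 : ℝ) : ℂ) := by push_cast; ring
      rw [e0, hE1, hE2]
      simp only [Complex.add_re, Complex.add_im, Complex.one_re, Complex.one_im,
        Complex.re_mul_ofReal, Complex.im_mul_ofReal]
      rw [hBr, hBi]
      ring
    rw [e]
    have h5 : 2 * A.re * xs k * (1 + A.re * xs k) ≤ 0 :=
      mul_nonpos_of_nonpos_of_nonneg (mul_nonpos_of_nonpos_of_nonneg (by linarith) hx.le)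
        (by nlinarith)
    have h6 : (E1 + E2 * xs k) * xs k ≤ 1 / 50 := by
      have h7 : E2 * xs k ≤ |E2| :=
        (mul_le_mul_of_nonneg_right (le_abs_self _) hx.le).trans
          (mul_le_of_le_one_right (abs_nonneg _) hx1.le)
      have h8 : (E1 + E2 * xs k) * xs k ≤ (|E1| + |E2| + 1) * xs k :=
        mul_le_mul_of_nonneg_right (by linarith [le_abs_self E1]) hx.le
      linarith
    have h9 : (E1 + E2 * xs k) * xs k * xs k ^ 2 ≤ 1 / 50 * xs k ^ 2 :=
      mul_le_mul_of_nonneg_right h6 (sq_nonneg _)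
    nlinarith [sq_nonneg (xs k ^ 2)]
  have h5 : ‖C * (xs k : ℂ) ^ 3‖ ≤ 1 / 25 * xs k ^ 2 := by
    rw [norm_mul, norm_pow, Complex.norm_real, Real.norm_of_nonneg hx.le]
    have : ‖C‖ * xs k ≤ 1 / 25 := by nlinarith
    calc ‖C‖ * xs k ^ 3 = (‖C‖ * xs k) * xs k ^ 2 := by ring
      _ ≤ _ := by gcongr
  unfold tau
  refine (norm_add_le _ _).trans ?_
  linarith

/-- If `Re A ≤ 0`, the inverse multiplier `τ_{k+1} τ_k / q_k` is at most `1 + 3x²/4`. -/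
lemma norm_inv_multiplier_le {q : ℕ → ℂ} {b' A B C : ℂ}
    (hq : (fun k => q k - (1 - (xs k : ℂ) ^ 2 + b' * (xs k : ℂ) ^ 4))
      =O[atTop] fun k => xs k ^ 5) (hA : A.re ≤ 0) (hB : 2 * B = A ^ 2 - 1 / 2) :
    ∀ᶠ k in atTop, q k ≠ 0 ∧
      ‖(q k * (tau A B C (k + 1) * tau A B C k)⁻¹)⁻¹‖ ≤ 1 + 3 / 4 * xs k ^ 2 := by
  have h1 := norm_tau_le (C := C) hA hB
  have h2 := (tendsto_add_atTop_nat 1).eventually h1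
  have h3 : (fun k => q k - (1 - (xs k : ℂ) ^ 2)) =O[atTop] fun k => xs k ^ (2 + 1) := by
    have e1 := hq.trans (xs_pow_isBigO (by norm_num : 3 ≤ 5))
    have e2 := isBigO_pow_mul 3 (f := fun x _ => b' * x) (by unfold Function.uncurry; fun_prop)
    refine (e1.add e2).congr_left fun k => ?_
    ring
  have h4 := norm_le_of_eventually_small h3 (ε := 1 / 100) (by norm_num)
  filter_upwards [h1, h2, h4, xs_eventually (ε := 1 / 10) (by norm_num), eventually_ge_atTop 1]
    with k h5 h6 h7 ⟨hx, hxs⟩ hk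
  have hy : xs k ^ 2 ≤ 1 / 100 := by nlinarith
  have h8 : 1 - xs k ^ 2 - 1 / 100 * xs k ^ 2 ≤ ‖q k‖ := by
    have h9 : (((1 - xs k ^ 2 : ℝ)) : ℂ) = q k - (q k - (1 - (xs k : ℂ) ^ 2)) := by
      push_cast; ring
    have h10 : ‖(((1 - xs k ^ 2 : ℝ)) : ℂ)‖ = 1 - xs k ^ 2 := by
      rw [Complex.norm_real, Real.norm_of_nonneg (by linarith)]
    have h11 := norm_sub_le (q k) (q k - (1 - (xs k : ℂ) ^ 2))
    rw [← h9, h10] at h11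
    linarith
  have hq0 : 0 < ‖q k‖ := by linarith
  refine ⟨norm_pos_iff.1 hq0, ?_⟩
  rw [mul_inv_rev, inv_inv, norm_mul, norm_inv, ← div_eq_mul_inv, div_le_iff₀ hq0, norm_mul]
  have h12 : xs k ^ 2 / 2 ≤ xs (k + 1) ^ 2 := by nlinarith [xs_succ_sq hk, sq_nonneg (xs (k + 1))]
  calc ‖tau A B C (k + 1)‖ * ‖tau A B C k‖
      ≤ (1 - xs k ^ 2 / 10) * (1 - xs k ^ 2 / 5) := by
        apply mul_le_mul (by linarith) h5 (norm_nonneg _) (by linarith)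
    _ ≤ (1 + 3 / 4 * xs k ^ 2) * (1 - xs k ^ 2 - 1 / 100 * xs k ^ 2) := by nlinarith [sq_nonneg (xs k)]
    _ ≤ _ := by gcongr

/-! ### Asymptotics of the approximate solution and the double-root theorem -/

/-- `log τ = Ax - x²/4 + O(x³)`: the constraint on `B` is what makes the coefficient of `x² = 1/k`,
hence the exponent of `k` in the solution, equal to `-1/4`. -/
lemma log_tau_expand {A B C : ℂ} (hB : 2 * B = A ^ 2 - 1 / 2) :
    (fun k => Complex.log (tau A B C k) - (A * xs k - (xs k : ℂ) ^ 2 / 4))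
      =O[atTop] fun k => xs k ^ 3 := by
  set z : ℕ → ℂ := fun k => tau A B C k - 1 with hz
  have hz0 : Tendsto z atTop (𝓝 0) := by
    simpa using (tau_tendsto A B C).sub_const 1
  have hz1 : z =O[atTop] fun k => xs k ^ 1 := by
    refine (isBigO_pow_mul 1 (f := fun x _ => A + B * x + C * x ^ 2)
      (by unfold Function.uncurry; fun_prop)).congr_left fun k => ?_
    simp only [hz, tau]; ring
  have hlog : (fun k => Complex.log (1 + z k) - (z k - z k ^ 2 / 2))
      =O[atTop] fun k => xs k ^ 3 := by
    have h1 : (fun k => Complex.log (1 + z k) - (z k - z k ^ 2 / 2))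
        =O[atTop] fun k => z k ^ 3 := by
      refine IsBigO.of_bound 1 ?_
      have hev : ∀ᶠ k in atTop, ‖z k‖ < 1 / 2 := by
        have := hz0.norm
        rw [norm_zero] at this
        exact this.eventually (gt_mem_nhds (by norm_num))
      filter_upwards [hev] with k hk
      have h2 := Complex.norm_log_sub_logTaylor_le 2 (z := z k) (by linarith)
      have h3 : Complex.logTaylor 3 (z k) = z k - z k ^ 2 / 2 := by
        simp [Complex.logTaylor, Finset.sum_range_succ]; ring
      rw [h3] at h2
      refine h2.trans ?_
      rw [norm_pow, one_mul]
      have h4 : (1 - ‖z k‖)⁻¹ ≤ 2 := by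
        rw [inv_le_comm₀ (by linarith) (by norm_num)]; linarith
      have h5 : 0 ≤ ‖z k‖ ^ 3 := by positivity
      norm_num
      nlinarith
    refine h1.trans ?_
    simpa [← pow_mul] using hz1.pow 3
  have hp := isBigO_pow_mul 3 (f := fun x _ => C - A * (B + C * x) - x * (B + C * x) ^ 2 / 2)
    (by unfold Function.uncurry; fun_prop)
  refine (hlog.add hp).congr_left fun k => ?_
  have : 1 + z k = tau A B C k := by simp [hz]
  rw [this]
  simp only [hz, tau]
  linear_combination (-(xs k : ℂ) ^ 2 / 2) * hB

lemma sqrt_diff_expand :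
    (fun k : ℕ => (√((k + 1 : ℕ) : ℝ) - √(k : ℝ)) - xs k / 2) =O[atTop] fun k => xs k ^ 3 := by
  refine IsBigO.of_bound 1 ?_
  filter_upwards [eventually_ge_atTop 1] with k hk
  have hk0 : (0 : ℝ) < k := by exact_mod_cast hk
  rw [Real.norm_of_nonneg (pow_nonneg (xs_nonneg k) 3), Real.norm_eq_abs]
  have hr := Real.sqrt_pos.2 hk0
  have hs1 := Real.sq_sqrt hk0.le
  have ht1 := Real.sq_sqrt (show (0 : ℝ) ≤ ((k + 1 : ℕ) : ℝ) by positivity)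
  push_cast at ht1 ⊢
  have hts : √(k : ℝ) ≤ √((k : ℝ) + 1) := Real.sqrt_le_sqrt (by linarith)
  have hx : xs k * √(k : ℝ) = 1 := inv_mul_cancel₀ hr.ne'
  have hxp := xs_pos hk
  generalize √((k : ℝ) + 1) = t at *
  generalize √(k : ℝ) = r at *
  generalize xs k = x at *
  -- with `d = t - r`: `d (2r + d) = 1`, so `x/2 - d = x d²/2` and `d ≤ x/2`.
  have h1 : (t - r) * (t + r) = 1 := by linear_combination ht1 - hs1
  have h2 : t - r ≤ x := by
    have : (t - r) * r ≤ x * r := by nlinarith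
    exact le_of_mul_le_mul_right this hr
  have h3 : t - r - x / 2 = -(x / 2 * (t - r) ^ 2) := by
    linear_combination (x / 2) * h1 - (t - r) * hx
  rw [h3, abs_neg, abs_of_nonneg (by positivity), one_mul]
  have : (t - r) ^ 2 ≤ x ^ 2 := pow_le_pow_left₀ (by linarith) h2 2
  nlinarith [pow_pos hxp 3]

lemma log_succ_expand :
    (fun k : ℕ => (Real.log ((k + 1 : ℕ) : ℝ) - Real.log (k : ℝ)) - xs k ^ 2)
      =O[atTop] fun k => xs k ^ 3 := by
  refine IsBigO.trans (g := fun k => xs k ^ 4) ?_ (xs_pow_isBigO (by norm_num))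
  refine IsBigO.of_bound 1 ?_
  filter_upwards [eventually_ge_atTop 1] with k hk
  have hk0 : (0 : ℝ) < k := by exact_mod_cast hk
  have h4 : xs k ^ 4 = ((k : ℝ)⁻¹) ^ 2 := by rw [← xs_sq]; ring
  rw [Real.norm_of_nonneg (pow_nonneg (xs_nonneg k) 4), Real.norm_eq_abs, h4, xs_sq]
  push_cast
  rw [← Real.log_div (by positivity) hk0.ne']
  have h1 := Real.log_le_sub_one_of_pos (show 0 < ((k : ℝ) + 1) / k by positivity)
  have h2 := Real.one_sub_inv_le_log_of_pos (show 0 < ((k : ℝ) + 1) / k by positivity)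
  have h5 : ((k : ℝ) + 1) / k - 1 = (k : ℝ)⁻¹ := by field_simp; ring
  have h6 : (k : ℝ)⁻¹ - ((k : ℝ)⁻¹) ^ 2 ≤ 1 - (((k : ℝ) + 1) / k)⁻¹ := by
    rw [inv_div, ← sub_nonneg]
    have : 1 - (k : ℝ) / (k + 1) - ((k : ℝ)⁻¹ - ((k : ℝ)⁻¹) ^ 2) = 1 / (k ^ 2 * (k + 1)) := by
      field_simp; ring
    rw [this]; positivity
  rw [abs_le]
  constructor <;> nlinarith [sq_nonneg ((k : ℝ)⁻¹)]

/-- The model solution `k^{-1/4} e^{δ√k}`, in exponential form (equal to `1` at `k = 0`). -/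
noncomputable def model (δ : ℂ) (k : ℕ) : ℂ :=
  Complex.exp (-(1 / 4) * (Real.log k : ℂ) + δ * (√(k : ℝ) : ℂ))

/-- A solution of `φ_{k+1} = τ_k φ_k` with the asymptotics of the model. -/
lemma exists_ratio_solution {δ A B C : ℂ} (hA : A = δ / 2) (hB : 2 * B = A ^ 2 - 1 / 2) :
    ∃ h : ℕ → ℂ, (fun k => h k - 1) =O[atTop] xs ∧ (∀ k, h k ≠ 0) ∧
      ∀ᶠ k in atTop, model δ (k + 1) * h (k + 1) = tau A B C k * (model δ k * h k) := by
  obtain ⟨L, hL, hLO⟩ := exists_primitive (fun k => Complex.log (tau A B C k)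
      - δ * ((√((k + 1 : ℕ) : ℝ) - √(k : ℝ) : ℝ) : ℂ)
      + 1 / 4 * ((Real.log ((k + 1 : ℕ) : ℝ) - Real.log (k : ℝ) : ℝ) : ℂ)) (by
    have h1 := log_tau_expand (C := C) hB
    have h2 : (fun k : ℕ => δ * (((√((k + 1 : ℕ) : ℝ) - √(k : ℝ)) - xs k / 2 : ℝ) : ℂ))
        =O[atTop] fun k => xs k ^ 3 :=
      ((Complex.isBigO_ofReal_left).2 sqrt_diff_expand).const_mul_left δ
    have h3 : (fun k : ℕ => (1 / 4 : ℂ) *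
        (((Real.log ((k + 1 : ℕ) : ℝ) - Real.log (k : ℝ)) - xs k ^ 2 : ℝ) : ℂ))
        =O[atTop] fun k => xs k ^ 3 :=
      ((Complex.isBigO_ofReal_left).2 log_succ_expand).const_mul_left _
    refine ((h1.sub h2).add h3).congr_left fun k => ?_
    rw [hA]
    push_cast
    ring)
  have hL0 : Tendsto L atTop (𝓝 0) := hLO.trans_tendsto xs_tendsto
  refine ⟨fun k => Complex.exp (L k), ?_, fun k => Complex.exp_ne_zero _, ?_⟩
  · refine IsBigO.trans (g := L) ?_ hLO
    refine IsBigO.of_bound 2 ?_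
    have := hL0.norm
    rw [norm_zero] at this
    filter_upwards [this.eventually (gt_mem_nhds one_pos)] with k hk
    exact Complex.norm_exp_sub_one_le hk.le
  · filter_upwards [(tau_tendsto A B C).eventually_ne one_ne_zero] with k hk
    unfold model
    rw [← Complex.exp_log hk, ← Complex.exp_add, ← Complex.exp_add, ← Complex.exp_add]
    congr 1
    have := hL k
    push_cast at this ⊢
    linear_combination this

/-- The Birkhoff–Adams theorem with a double characteristic root `1`, in the normalisation
`p = -2 + a/k + a'/k² + ⋯`, `q = 1 - 1/k + b'/k² + ⋯`. -/
theorem birkhoff_adams {p q : ℕ → ℂ} {a a' b' δ : ℂ}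
    (hp : (fun k => p k - (-2 + a * (xs k : ℂ) ^ 2 + a' * (xs k : ℂ) ^ 4))
      =O[atTop] fun k => xs k ^ 5)
    (hq : (fun k => q k - (1 - (xs k : ℂ) ^ 2 + b' * (xs k : ℂ) ^ 4))
      =O[atTop] fun k => xs k ^ 5)
    (hδ0 : δ ≠ 0) (hδ : δ ^ 2 = 4 * (1 - a)) :
    ∃ g : ℕ → ℂ, (fun k => g k - 1) =O[atTop] xs ∧
      ∀ᶠ k in atTop, model δ (k + 2) * g (k + 2) + p k * (model δ (k + 1) * g (k + 1))
        + q k * (model δ k * g k) = 0 := by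
  obtain ⟨A, hAdef⟩ : ∃ A, A = δ / 2 := ⟨_, rfl⟩
  obtain ⟨B, hBdef⟩ : ∃ B : ℂ, B = (1 / 2 - a) / 2 := ⟨_, rfl⟩
  obtain ⟨C, hCdef⟩ : ∃ C : ℂ, C = -(a' - B - A ^ 2 / 2 + B ^ 2 + B * a + b') / (2 * A) := ⟨_, rfl⟩
  have hA0 : A ≠ 0 := by rw [hAdef]; exact div_ne_zero hδ0 two_ne_zero
  have hA : A ^ 2 = 1 - a := by rw [hAdef]; linear_combination hδ / 4
  have hB : 2 * B = 1 / 2 - a := by rw [hBdef]; ring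
  have hB' : 2 * B = A ^ 2 - 1 / 2 := by rw [hB, hA]; ring
  have hC : 2 * A * C + a' - B - A ^ 2 / 2 + B ^ 2 + B * a + b' = 0 := by
    rw [hCdef]; field_simp; ring
  obtain ⟨h, hh1, hh0, hh⟩ := exists_ratio_solution (C := C) hAdef hB'
  have hres := isBigO_mul_bounded (residual_isBigO hp hq hA hB hC) (tau_mul_inv_bounded A B C)
  -- Substituting `v = φ s` with `φ_{k+1} = τ_k φ_k` and dividing by `τ_{k+1} τ_k φ_k`
  -- turns the recurrence for `v` into the reduced one for `s`.
  obtain ⟨s, hs, hs1⟩ : ∃ s : ℕ → ℂ,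
      (∀ᶠ k in atTop, Reduced (fun k => q k * (tau A B C (k + 1) * tau A B C k)⁻¹)
        (fun k => (tau A B C (k + 1) * tau A B C k + p k * tau A B C k + q k)
          * (tau A B C (k + 1) * tau A B C k)⁻¹) s k) ∧ (fun k => s k - 1) =O[atTop] xs := by
    rcases le_or_gt A.re 0 with hre | hre
    · have hinv := norm_inv_multiplier_le (C := C) hq hre hB'
      refine exists_reduced_of_expanding _ _ ?_ (hinv.mono fun k hk => hk.2) hres
      filter_upwards [hinv, (tau_mul_tendsto A B C).eventually_ne one_ne_zero] with k h1 h2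
      exact mul_ne_zero h1.1 (inv_ne_zero h2)
    · exact exists_reduced_of_contracting _ _ (norm_multiplier_le hq hre) hres
  refine ⟨fun k => h k * s k, ?_, ?_⟩
  · have hsb : s =O[atTop] fun _ => (1 : ℝ) := by
      have h2 : Tendsto (fun k => s k - 1 + 1) atTop (𝓝 (0 + 1)) :=
        (hs1.trans_tendsto xs_tendsto).add_const 1
      simp only [sub_add_cancel] at h2
      exact h2.isBigO_one ℝ
    have h3 := hh1.mul hsb
    simp only [mul_one] at h3
    refine (h3.add hs1).congr_left fun k => ?_
    ring
  · filter_upwards [hh, (tendsto_add_atTop_nat 1).eventually hh, hs,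
      (tau_mul_tendsto A B C).eventually_ne one_ne_zero] with k h1 h2 h3 h4
    have h5 : model δ (k + 2) * h (k + 2)
        = tau A B C (k + 1) * tau A B C k * (model δ k * h k) := by
      rw [show k + 2 = k + 1 + 1 from rfl, h2, h1]; ring
    have e1 : model δ (k + 2) * (h (k + 2) * s (k + 2)) + p k * (model δ (k + 1)
        * (h (k + 1) * s (k + 1))) + q k * (model δ k * (h k * s k))
        = (model δ (k + 2) * h (k + 2)) * s (k + 2) + p k * ((model δ (k + 1) * h (k + 1))
          * s (k + 1)) + q k * (model δ k * h k) * s k := by ring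
    rw [e1, h5, h1]
    simp only [Reduced] at h3
    generalize tau A B C (k + 1) * tau A B C k = w at *
    have h6 : w * (s (k + 2) - s (k + 1)) = q k * (s (k + 1) - s k)
        - (w + p k * tau A B C k + q k) * s (k + 1) := by
      rw [h3]; field_simp
    linear_combination (model δ k * h k) * h6

/-! ### Expansions of the coefficients -/

/-- `f k = c₀ + c₁/k + c₂/k² + O(k^{-5/2})` for some `c₂`, written in terms of `1/√k`. -/
def IsJet (f : ℕ → ℂ) (c₀ c₁ : ℂ) : Prop :=
  ∃ c₂ : ℂ, (fun k => f k - (c₀ + c₁ * (xs k : ℂ) ^ 2 + c₂ * (xs k : ℂ) ^ 4))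
    =O[atTop] fun k => xs k ^ 5

lemma IsJet.lin (a b : ℂ) : IsJet (fun k => a + b * (xs k : ℂ) ^ 2) a b :=
  ⟨0, by simpa using isBigO_zero _ _⟩

lemma IsJet.inv (t : ℂ) : IsJet (fun k => (2 + t * (xs k : ℂ) ^ 2)⁻¹) (1 / 2) (-t / 4) := by
  refine ⟨t ^ 2 / 8, ?_⟩
  have hlim : Tendsto (fun k => 2 + t * (xs k : ℂ) ^ 2) atTop (𝓝 2) := by
    simpa using ((xs_ofReal_tendsto.pow 2).const_mul t).const_add 2
  have hb := (hlim.inv₀ two_ne_zero).isBigO_one ℝ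
  have h1 := isBigO_mul_bounded (isBigO_pow_mul 5 (f := fun x _ => -t ^ 3 / 8 * x)
    (by unfold Function.uncurry; fun_prop)) hb
  refine h1.congr' ?_ EventuallyEq.rfl
  filter_upwards [hlim.eventually_ne two_ne_zero] with k hk
  have hi := mul_inv_cancel₀ hk
  linear_combination -(1 / 2 - t / 4 * (xs k : ℂ) ^ 2 + t ^ 2 / 8 * (xs k : ℂ) ^ 4) * hi

lemma IsJet.mul {f g : ℕ → ℂ} {c₀ c₁ d₀ d₁ : ℂ} (hf : IsJet f c₀ c₁) (hg : IsJet g d₀ d₁) :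
    IsJet (fun k => f k * g k) (c₀ * d₀) (c₀ * d₁ + c₁ * d₀) := by
  obtain ⟨c₂, hf⟩ := hf
  obtain ⟨d₂, hg⟩ := hg
  refine ⟨c₀ * d₂ + c₁ * d₁ + c₂ * d₀, ?_⟩
  have hgb : g =O[atTop] fun _ => (1 : ℝ) := by
    have h1 := xs_bounded_comp (f := fun x _ => d₀ + d₁ * x ^ 2 + d₂ * x ^ 4)
      (by unfold Function.uncurry; fun_prop)
    have h2 : (fun k => xs k ^ 5) =O[atTop] fun _ => (1 : ℝ) := by
      simpa using xs_pow_isBigO (Nat.zero_le 5)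
    refine ((hg.trans h2).add h1).congr_left fun k => ?_
    ring
  have h1 := isBigO_mul_bounded hf hgb
  have h2 := isBigO_mul_bounded hg (xs_bounded_comp (f := fun x _ => c₀ + c₁ * x ^ 2 + c₂ * x ^ 4)
    (by unfold Function.uncurry; fun_prop))
  have h3 := isBigO_pow_mul 5 (f := fun x _ => (c₁ * d₂ + c₂ * d₁) * x + c₂ * d₂ * x ^ 3)
    (by unfold Function.uncurry; fun_prop)
  refine ((h1.add h2).add h3).congr_left fun k => ?_
  ring

lemma IsJet.add {f g : ℕ → ℂ} {c₀ c₁ d₀ d₁ : ℂ} (hf : IsJet f c₀ c₁) (hg : IsJet g d₀ d₁) :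
    IsJet (fun k => f k + g k) (c₀ + d₀) (c₁ + d₁) := by
  obtain ⟨c₂, hf⟩ := hf
  obtain ⟨d₂, hg⟩ := hg
  refine ⟨c₂ + d₂, (hf.add hg).congr_left fun k => ?_⟩
  ring

lemma IsJet.const_mul {f : ℕ → ℂ} {c₀ c₁ : ℂ} (c : ℂ) (hf : IsJet f c₀ c₁) :
    IsJet (fun k => c * f k) (c * c₀) (c * c₁) := by
  obtain ⟨c₂, hf⟩ := hf
  refine ⟨c * c₂, (hf.const_mul_left c).congr_left fun k => ?_⟩
  ring

lemma IsJet.congr {f g : ℕ → ℂ} {c₀ c₁ d₀ d₁ : ℂ} (hf : IsJet f c₀ c₁)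
    (hfg : ∀ k ≥ 1, f k = g k) (h₀ : c₀ = d₀) (h₁ : c₁ = d₁) : IsJet g d₀ d₁ := by
  obtain ⟨c₂, hf⟩ := hf
  subst h₀ h₁
  refine ⟨c₂, hf.congr' ?_ EventuallyEq.rfl⟩
  filter_upwards [eventually_ge_atTop 1] with k hk
  rw [hfg k hk]

lemma xs_ofReal_sq (k : ℕ) : (xs k : ℂ) ^ 2 = (k : ℂ)⁻¹ := by
  rw [← Complex.ofReal_pow, xs_sq]
  push_cast
  rfl

/-- `P₂(k) = 1 - 1/k + ⋯`, read off from `P₂` as a product of factors `2 + b/k` and `(2 + t/k)⁻¹`. -/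
lemma jet_P₂ (lam : ℝ) (P₂ : ℕ+ → ℝ) (hlam' : ∀ k : ℕ+, lam ≠ 2 * ((k : ℕ) : ℝ))
    (hP₂ : ∀ k : ℕ+,
      P₂ k = ((2 * ((k : ℕ) : ℝ) + 2 - lam) / (2 * ((k : ℕ) : ℝ) - lam))
              * (((2 * ((k : ℕ) : ℝ) - 1) * (2 * ((k : ℕ) : ℝ)))
                / ((2 * ((k : ℕ) : ℝ) + 1) * (2 * ((k : ℕ) : ℝ) + 2)))) :
    IsJet (fun n => (P₂ n.toPNat' : ℂ)) 1 (-1) := by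
  have h := ((((IsJet.lin 2 (2 - lam)).mul (IsJet.inv (-lam))).mul
    ((IsJet.lin 4 (-2)).mul (IsJet.inv 1))).mul (IsJet.inv 2))
  refine h.congr (fun k hk => ?_) (by norm_num) (by ring)
  have hc : ((k.toPNat' : ℕ+) : ℕ) = k := by
    rw [Nat.toPNat'_coe, if_pos (by omega)]
  have hl := hlam' k.toPNat'
  have hk0 : (k : ℂ) ≠ 0 := by exact_mod_cast (by omega : k ≠ 0)
  have hd1 : (2 * (k : ℂ) - lam) ≠ 0 := by
    rw [hc] at hl
    rw [sub_ne_zero]; exact_mod_cast hl.symm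
  have hd2 : (2 * (k : ℂ) + 1) ≠ 0 := by exact_mod_cast (by omega : 2 * k + 1 ≠ 0)
  have hd3 : (2 * (k : ℂ) + 2) ≠ 0 := by exact_mod_cast (by omega : 2 * k + 2 ≠ 0)
  have hx : (xs k : ℂ) ^ 2 = (k : ℂ)⁻¹ := xs_ofReal_sq k
  have i1 : (2 + -(lam : ℂ) * (k : ℂ)⁻¹)⁻¹ = k / (2 * (k : ℂ) - lam) := by
    rw [inv_eq_iff_eq_inv, inv_div]; field_simp; ring
  have i2 : (2 + 1 * (k : ℂ)⁻¹)⁻¹ = k / (2 * (k : ℂ) + 1) := by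
    rw [inv_eq_iff_eq_inv, inv_div]; field_simp
  have i3 : (2 + 2 * (k : ℂ)⁻¹)⁻¹ = k / (2 * (k : ℂ) + 2) := by
    rw [inv_eq_iff_eq_inv, inv_div]; field_simp
  rw [hP₂, hc, hx, i1, i2, i3]
  push_cast
  field_simp
  ring

/-- `α P₁(k) = -2 + a/k + ⋯` with `a = 1 + α(λ - 1/2)/(c₁c₂)`. Criticality, in the form
`c₁² + c₂² - 1 = -2αc₁c₂`, gives the double characteristic root. -/
lemma jet_P₁ (c₁ c₂ : ℝ) (hne : c₁ * c₂ ≠ 0) (lam α : ℝ) (hα2 : α ^ 2 = 1)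
    (hcα : c₁ ^ 2 + c₂ ^ 2 - 1 = -2 * α * (c₁ * c₂))
    (P₁ : ℕ+ → ℝ) (hlam' : ∀ k : ℕ+, lam ≠ 2 * ((k : ℕ) : ℝ))
    (hP₁ : ∀ k : ℕ+,
      P₁ k = ((2 * ((k : ℕ) : ℝ) + 2 - lam) / (2 * ((k : ℕ) : ℝ) - lam))
              * ((4 * ((k : ℕ) : ℝ) ^ 2 * c₂)
                / ((2 * ((k : ℕ) : ℝ) + 1) * (2 * ((k : ℕ) : ℝ) + 2) * c₁))
            - ((2 * ((k : ℕ) : ℝ) + 1 - lam) * (2 * ((k : ℕ) : ℝ) + 2 - lam))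
              / ((2 * ((k : ℕ) : ℝ) + 1) * (2 * ((k : ℕ) : ℝ) + 2) * c₁ * c₂)
            + ((2 * ((k : ℕ) : ℝ) + 1) * c₁) / ((2 * ((k : ℕ) : ℝ) + 2) * c₂)) :
    IsJet (fun n => (α : ℂ) * (P₁ n.toPNat' : ℂ)) (-2)
      (1 + (α : ℂ) * (lam - 1 / 2) / (c₁ * c₂)) := by
  have hc1 : (c₁ : ℂ) ≠ 0 := by exact_mod_cast left_ne_zero_of_mul hne
  have hc2 : (c₂ : ℂ) ≠ 0 := by exact_mod_cast right_ne_zero_of_mul hne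
  have hα2' : (α : ℂ) ^ 2 = 1 := by exact_mod_cast hα2
  have hcα' : (c₁ : ℂ) ^ 2 + c₂ ^ 2 - 1 = -2 * α * (c₁ * c₂) := by exact_mod_cast hcα
  have t1 := (((IsJet.lin 2 (2 - lam)).mul (IsJet.inv (-lam))).mul
    ((IsJet.inv 1).mul (IsJet.inv 2))).const_mul (4 * c₂ / c₁ : ℂ)
  have t2 := (((IsJet.lin 2 (1 - lam)).mul (IsJet.lin 2 (2 - lam))).mul
    ((IsJet.inv 1).mul (IsJet.inv 2))).const_mul (-1 / (c₁ * c₂) : ℂ)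
  have t3 := ((IsJet.lin 2 1).mul (IsJet.inv 2)).const_mul (c₁ / c₂ : ℂ)
  refine (((t1.add t2).add t3).const_mul (α : ℂ)).congr (fun k hk => ?_) ?_ ?_
  · have hc : ((k.toPNat' : ℕ+) : ℕ) = k := by
      rw [Nat.toPNat'_coe, if_pos (by omega)]
    have hl := hlam' k.toPNat'
    have hk0 : (k : ℂ) ≠ 0 := by exact_mod_cast (by omega : k ≠ 0)
    have hd1 : (2 * (k : ℂ) - lam) ≠ 0 := by
      rw [hc] at hl
      rw [sub_ne_zero]; exact_mod_cast hl.symm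
    have hd2 : (2 * (k : ℂ) + 1) ≠ 0 := by exact_mod_cast (by omega : 2 * k + 1 ≠ 0)
    have hd3 : (2 * (k : ℂ) + 2) ≠ 0 := by exact_mod_cast (by omega : 2 * k + 2 ≠ 0)
    have hx : (xs k : ℂ) ^ 2 = (k : ℂ)⁻¹ := xs_ofReal_sq k
    have i1 : (2 + -(lam : ℂ) * (k : ℂ)⁻¹)⁻¹ = k / (2 * (k : ℂ) - lam) := by
      rw [inv_eq_iff_eq_inv, inv_div]; field_simp; ring
    have i2 : (2 + 1 * (k : ℂ)⁻¹)⁻¹ = k / (2 * (k : ℂ) + 1) := by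
      rw [inv_eq_iff_eq_inv, inv_div]; field_simp
    have i3 : (2 + 2 * (k : ℂ)⁻¹)⁻¹ = k / (2 * (k : ℂ) + 2) := by
      rw [inv_eq_iff_eq_inv, inv_div]; field_simp
    rw [hP₁, hc, hx, i1, i2, i3]
    push_cast
    field_simp
    ring
  · field_simp
    linear_combination (4 * α : ℂ) * hcα' - 8 * (c₁ * c₂ : ℂ) * hα2'
  · field_simp
    linear_combination (-16 * α : ℂ) * hcα' + 32 * (c₁ * c₂ : ℂ) * hα2'

/-! ### Solutions on all positive indices -/

lemma model_eq (δ : ℂ) {k : ℕ} (hk : 1 ≤ k) :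
    model δ k = (((k : ℝ) ^ (-(1 / 4 : ℝ)) : ℝ) : ℂ) * Complex.exp (δ * (√(k : ℝ) : ℂ)) := by
  have : (0 : ℝ) < k := by exact_mod_cast hk
  unfold model
  rw [Real.rpow_def_of_pos this, Complex.exp_add]
  push_cast
  congr 2
  ring

/-- Since `q` never vanishes, a solution of the recurrence near infinity extends to all
indices `≥ 1`. -/
lemma exists_extension {p q w : ℕ → ℂ} {N : ℕ} (hN : 1 ≤ N) (hq : ∀ k ≥ 1, q k ≠ 0)
    (hw : ∀ k ≥ N, w (k + 2) + p k * w (k + 1) + q k * w k = 0) :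
    ∃ v : ℕ → ℂ, (∀ k ≥ N, v k = w k) ∧
      ∀ k ≥ 1, v (k + 2) + p k * v (k + 1) + q k * v k = 0 := by
  refine Nat.decreasingInduction'
    (P := fun j => ∃ v : ℕ → ℂ, (∀ k ≥ N, v k = w k) ∧
      ∀ k ≥ j, v (k + 2) + p k * v (k + 1) + q k * v k = 0) ?_ hN ⟨w, fun _ _ => rfl, hw⟩
  rintro j hjN hj ⟨v, hv, hrec⟩
  refine ⟨Function.update v j (-(v (j + 2) + p j * v (j + 1)) / q j), fun k hk => ?_,
    fun k hk => ?_⟩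
  · rw [Function.update_of_ne (by omega)]; exact hv k hk
  · rcases (show j ≤ k from hk).eq_or_lt with rfl | hlt
    · have := hq j hj
      rw [Function.update_self, Function.update_of_ne (by omega),
        Function.update_of_ne (by omega)]
      field_simp
      ring
    · rw [Function.update_of_ne (by omega), Function.update_of_ne (by omega),
        Function.update_of_ne (by omega)]
      exact hrec k hlt

/-- The solution attached to one choice of the square root `δ`. -/
lemma exists_solution {P₁ P₂ : ℕ+ → ℝ} {α : ℝ} (hα2 : α ^ 2 = 1) {a δ : ℂ}
    (h₁ : IsJet (fun n => (α : ℂ) * (P₁ n.toPNat' : ℂ)) (-2) a)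
    (h₂ : IsJet (fun n => (P₂ n.toPNat' : ℂ)) 1 (-1)) (hP₂ : ∀ k, P₂ k ≠ 0)
    (hδ0 : δ ≠ 0) (hδ : δ ^ 2 = 4 * (1 - a)) :
    ∃ v r : ℕ+ → ℂ,
      (∀ k : ℕ+, v (k + 2) + (P₁ k : ℂ) * v (k + 1) + (P₂ k : ℂ) * v k = 0) ∧
      (∀ k : ℕ+, v k = ((α : ℂ) ^ (k : ℕ))
          * ((((k : ℕ) : ℝ) ^ (-(1 / 4 : ℝ)) : ℝ) : ℂ)
          * Complex.exp (δ * (Real.sqrt ((k : ℕ) : ℝ) : ℂ)) * (1 + r k)) ∧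
      r =O[atTop] fun k : ℕ+ => 1 / Real.sqrt ((k : ℕ) : ℝ) := by
  obtain ⟨a', h₁⟩ := h₁
  obtain ⟨b', h₂⟩ := h₂
  have hα2' : (α : ℂ) ^ 2 = 1 := by exact_mod_cast hα2
  have hα0 : (α : ℂ) ≠ 0 := by
    intro h; rw [h] at hα2'; norm_num at hα2'
  obtain ⟨g, hg, hrec⟩ := birkhoff_adams h₁ (b' := b') (h₂.congr_left fun k => by ring) hδ0 hδ
  obtain ⟨N, hN⟩ := eventually_atTop.1 (hrec.and (eventually_ge_atTop 1))
  obtain ⟨v, hv, hvrec⟩ := exists_extension (p := fun n => (P₁ n.toPNat' : ℂ))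
    (q := fun n => (P₂ n.toPNat' : ℂ)) (w := fun n => (α : ℂ) ^ n * (model δ n * g n))
    (N := N) (hN N le_rfl).2 (fun k _ => by exact_mod_cast hP₂ _) (fun k hk => by
      have h := (hN k hk).1
      simp only [pow_succ]
      linear_combination (α : ℂ) ^ k * h
        + (α : ℂ) ^ k * (model δ (k + 2) * g (k + 2)) * hα2')
  have hm0 : ∀ k, (α : ℂ) ^ k * model δ k ≠ 0 := fun k =>
    mul_ne_zero (pow_ne_zero k hα0) (Complex.exp_ne_zero _)
  refine ⟨fun k => v k, fun k => v k / ((α : ℂ) ^ (k : ℕ) * model δ k) - 1, fun k => ?_,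
    fun k => ?_, ?_⟩
  · have h := hvrec k k.pos
    simpa using h
  · have h0 := hm0 k
    rw [mul_assoc ((α : ℂ) ^ (k : ℕ)), ← model_eq δ k.pos, add_sub_cancel, mul_div_cancel₀ _ h0]
  · have h1 : (fun k => v k / ((α : ℂ) ^ k * model δ k) - 1) =O[atTop] xs := by
      refine hg.congr' ?_ EventuallyEq.rfl
      filter_upwards [eventually_ge_atTop N] with k hk
      rw [hv k hk, ← mul_assoc, mul_div_cancel_left₀ _ (hm0 k)]
    have h2 := h1.comp_tendsto tendsto_PNat_val_atTop_atTop
    simpa [Function.comp_def, xs] using h2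

/-- (Birkhoff–Adams, double-root case, for the elimination
recurrence.) If `|c₁² + c₂² − 1| = 2|c₁c₂|` (so `a₀ = ±2`) and `λ ≠ 1/2`, the recurrence
`v_{k+2} + P₁(k)v_{k+1} + P₂(k)v_k = 0` has solutions
`v_k^± = α^k k^{−1/4} exp(δ_± √k)(1 + O(1/√k))` with `α = −a₀/2`,
`δ₊ = 2√((2λ−1)/(2c₁c₂))` if `a₀ = 2`, `δ₊ = 2√((1−2λ)/(2c₁c₂))` if `a₀ = −2`
(principal complex square roots), and `δ₋ = −δ₊`. -/
theorem stmt_18 (c₁ c₂ : ℝ) (hne : c₁ * c₂ ≠ 0)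
    (hcrit : |c₁ ^ 2 + c₂ ^ 2 - 1| = 2 * |c₁ * c₂|)
    (lam : ℝ) (hhalf : lam ≠ 1 / 2) (hlam' : ∀ k : ℕ+, lam ≠ 2 * ((k : ℕ) : ℝ))
    (a₀ : ℝ) (ha₀ : a₀ = (c₁ ^ 2 + c₂ ^ 2 - 1) / (c₁ * c₂))
    (α : ℝ) (hα : α = -a₀ / 2)
    (δp δm : ℂ)
    (hδp2 : a₀ = 2 →
      δp = 2 * ((((2 * lam - 1) / (2 * c₁ * c₂) : ℝ) : ℂ) ^ ((1 : ℂ) / 2)))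
    (hδpm2 : a₀ = -2 →
      δp = 2 * ((((1 - 2 * lam) / (2 * c₁ * c₂) : ℝ) : ℂ) ^ ((1 : ℂ) / 2)))
    (hδm : δm = -δp)
    (P₁ P₂ : ℕ+ → ℝ)
    (hP₁ : ∀ k : ℕ+,
      P₁ k = ((2 * ((k : ℕ) : ℝ) + 2 - lam) / (2 * ((k : ℕ) : ℝ) - lam))
              * ((4 * ((k : ℕ) : ℝ) ^ 2 * c₂)
                / ((2 * ((k : ℕ) : ℝ) + 1) * (2 * ((k : ℕ) : ℝ) + 2) * c₁))
            - ((2 * ((k : ℕ) : ℝ) + 1 - lam) * (2 * ((k : ℕ) : ℝ) + 2 - lam))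
              / ((2 * ((k : ℕ) : ℝ) + 1) * (2 * ((k : ℕ) : ℝ) + 2) * c₁ * c₂)
            + ((2 * ((k : ℕ) : ℝ) + 1) * c₁) / ((2 * ((k : ℕ) : ℝ) + 2) * c₂))
    (hP₂ : ∀ k : ℕ+,
      P₂ k = ((2 * ((k : ℕ) : ℝ) + 2 - lam) / (2 * ((k : ℕ) : ℝ) - lam))
              * (((2 * ((k : ℕ) : ℝ) - 1) * (2 * ((k : ℕ) : ℝ)))
                / ((2 * ((k : ℕ) : ℝ) + 1) * (2 * ((k : ℕ) : ℝ) + 2)))) :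
    ∃ vp vm : ℕ+ → ℂ,
      (∀ k : ℕ+, vp (k + 2) + (P₁ k : ℂ) * vp (k + 1) + (P₂ k : ℂ) * vp k = 0) ∧
      (∀ k : ℕ+, vm (k + 2) + (P₁ k : ℂ) * vm (k + 1) + (P₂ k : ℂ) * vm k = 0) ∧
      ∃ rp rm : ℕ+ → ℂ,
        (∀ k : ℕ+, vp k = ((α : ℂ) ^ (k : ℕ))
          * ((((k : ℕ) : ℝ) ^ (-(1 / 4 : ℝ)) : ℝ) : ℂ)
          * Complex.exp (δp * (Real.sqrt ((k : ℕ) : ℝ) : ℂ)) * (1 + rp k)) ∧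
        (∀ k : ℕ+, vm k = ((α : ℂ) ^ (k : ℕ))
          * ((((k : ℕ) : ℝ) ^ (-(1 / 4 : ℝ)) : ℝ) : ℂ)
          * Complex.exp (δm * (Real.sqrt ((k : ℕ) : ℝ) : ℂ)) * (1 + rm k)) ∧
        (rp =O[Filter.atTop] fun k : ℕ+ => 1 / Real.sqrt ((k : ℕ) : ℝ)) ∧
        (rm =O[Filter.atTop] fun k : ℕ+ => 1 / Real.sqrt ((k : ℕ) : ℝ)) := by
  have hc1 : c₁ ≠ 0 := left_ne_zero_of_mul hne
  have hc2 : c₂ ≠ 0 := right_ne_zero_of_mul hne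
  have ha2 : a₀ = 2 ∨ a₀ = -2 := by
    rw [← abs_eq (by norm_num : (0 : ℝ) ≤ 2), ha₀, abs_div, hcrit]
    exact mul_div_cancel_right₀ _ (abs_ne_zero.2 hne)
  have hα2 : α ^ 2 = 1 := by
    rcases ha2 with h | h <;> rw [hα, h] <;> norm_num
  have hcα : c₁ ^ 2 + c₂ ^ 2 - 1 = -2 * α * (c₁ * c₂) := by
    rw [hα, ha₀]; field_simp
  have hsq : ∀ z : ℂ, (2 * z ^ ((1 : ℂ) / 2)) ^ 2 = 4 * z := by
    intro z
    have h : (z ^ ((1 : ℂ) / 2)) ^ 2 = z := by simp [one_div]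
    rw [mul_pow, h]; norm_num
  have hδ : δp ^ 2 = 4 * (1 - (1 + (α : ℂ) * (lam - 1 / 2) / (c₁ * c₂))) := by
    have hc1' : (c₁ : ℂ) ≠ 0 := by exact_mod_cast hc1
    have hc2' : (c₂ : ℂ) ≠ 0 := by exact_mod_cast hc2
    rcases ha2 with h | h
    · rw [hδp2 h, hsq, hα, h]
      push_cast
      field_simp
      ring
    · rw [hδpm2 h, hsq, hα, h]
      push_cast
      field_simp
      ring
  have hδ0 : δp ≠ 0 := by
    intro h0
    have hα0 : α ≠ 0 := by intro h; rw [h] at hα2; norm_num at hα2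
    have h1 : α * (lam - 1 / 2) / (c₁ * c₂) ≠ 0 :=
      div_ne_zero (mul_ne_zero hα0 (sub_ne_zero.2 hhalf)) hne
    apply h1
    rw [h0] at hδ
    have : ((α * (lam - 1 / 2) / (c₁ * c₂) : ℝ) : ℂ) = 0 := by
      push_cast
      linear_combination (1 / 4) * hδ
    exact_mod_cast this
  have hP₂0 : ∀ k, P₂ k ≠ 0 := by
    intro k
    have hk : (1 : ℝ) ≤ ((k : ℕ) : ℝ) := by exact_mod_cast k.pos
    have h1 := hlam' k
    have h2 := hlam' (k + 1)
    push_cast at h2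
    rw [hP₂]
    refine mul_ne_zero (div_ne_zero ?_ ?_) (div_ne_zero ?_ ?_)
    · intro h; apply h2; linarith
    · intro h; apply h1; linarith
    · exact (mul_pos (by linarith) (by linarith)).ne'
    · positivity
  have j₁ := jet_P₁ c₁ c₂ hne lam α hα2 hcα P₁ hlam' hP₁
  have j₂ := jet_P₂ lam P₂ hlam' hP₂
  obtain ⟨vp, rp, h1, h2, h3⟩ := exists_solution hα2 j₁ j₂ hP₂0 hδ0 hδ
  obtain ⟨vm, rm, h4, h5, h6⟩ := exists_solution (δ := δm) hα2 j₁ j₂ hP₂0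
    (by rw [hδm]; exact neg_ne_zero.2 hδ0) (by rw [hδm, neg_sq]; exact hδ)
  exact ⟨vp, vm, h1, h4, rp, rm, h2, h5, h3, h6⟩
end
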